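/- arXiv:1909.09832 — 2 statements merged into one kernel-verified Lean document; each statement's English description precedes it below -/
import Mathlib

section
/- Let Λ be an abelian group containing Kˣ as a subgroup such that Λ/Kˣ is a free abelian group of finite rank, and let V be a valuative submonoid of Λ which dominates the valuative submonoid V₀ := A∖{0} of Kˣ. Let R := A ⊗_{ℤ[V₀]} ℤ[V], where ℤ[M] denotes the monoid algebra of the monoid M over ℤ, the ring homomorphism ℤ[V₀] → A is induced by the inclusion of the multiplicative monoid V₀ into A, and ℤ[V₀] → ℤ[V] is induced by the inclusion V₀ ⊆ V. Let 𝔭 be the ideal of R generated by the image of V∖Vˣ in R. Then 𝔭 is a prime ideal of R and the localization R_𝔭 is a valuation ring. -/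
set_option synthInstance.maxHeartbeats 400000

open scoped TensorProduct

/-!
The ring `R = A ⊗ ℤ[V]` is graded by the torsion-free group `Λ/Kˣ`, the monomial `1 ⊗ v` having
the class of `v` as its degree. Two monomials of the same degree differ by an element of `Kˣ`, hence
by a scalar of the valuation ring `A`, so every nonzero homogeneous element is a monomial; and since
`V` is valuative, monomials are totally ordered by divisibility. Monomials do not vanish, because
the embedding of `Kˣ` in the unit group of an algebraic closure of `K`, which is divisible, extends
to a character of `Λ`.

These properties suffice. A torsion-free group can be ordered, so it is enough to test on
homogeneous elements whether an ideal is prime. Of two homogeneous nonunits one divides their sum,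
so by induction the degree-zero component of an element of `𝔭` is a nonunit and `𝔭` is proper.
Finally, dividing `r ≠ 0` by a component of `r` which is minimal for divisibility gives a quotient
whose degree-zero component is `1`, hence a unit of `R_𝔭`: up to units every element of `R_𝔭` is
homogeneous.
-/

theorem exists_linearOrder_isOrderedAddMonoid (G : Type*) [AddCommGroup G] [IsAddTorsionFree G] :
    ∃ _ : LinearOrder G, IsOrderedAddMonoid G := by
  let b := Module.Free.chooseBasis ℚ (DivisibleHull G)
  obtain ⟨_, _⟩ := exists_wellFoundedLT (Module.Free.ChooseBasisIndex ℚ (DivisibleHull G))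
  let φ (g : G) : Lex (Module.Free.ChooseBasisIndex ℚ (DivisibleHull G) →₀ ℚ) :=
    toLex (b.repr (g : DivisibleHull G))
  have hφ : Function.Injective φ :=
    toLex.injective.comp (b.repr.injective.comp DivisibleHull.coe_injective)
  have hφ_add (g h : G) : φ (g + h) = φ g + φ h :=
    congrArg (fun x => toLex (b.repr x)) (map_add (DivisibleHull.coeAddMonoidHom G) g h) |>.trans
      (congrArg toLex (map_add b.repr _ _))
  let _ : LinearOrder G := LinearOrder.lift' φ hφ
  exact ⟨inferInstance, Function.Injective.isOrderedAddMonoid φ hφ_add Iff.rfl⟩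

theorem exists_units_monoidHom_comp_eq {G H L : Type*} [CommGroup G] [CommGroup H]
    [Field L] [IsAlgClosed L] {f : G →* H} (hf : Function.Injective f) (g : G →* Lˣ) :
    ∃ κ : H →* Lˣ, κ.comp f = g := by
  have hpow {n : ℕ} (hn : n ≠ 0) (u : Lˣ) : ∃ v : Lˣ, v ^ n = u := by
    obtain ⟨z, hz⟩ := IsAlgClosed.exists_pow_nat_eq (u : L) (Nat.pos_of_ne_zero hn)
    have hz0 : z ≠ 0 := by
      rintro rfl
      exact u.ne_zero (by rw [← hz, zero_pow hn])
    exact ⟨Units.mk0 z hz0, Units.ext hz⟩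
  let _ : DivisibleBy (Additive Lˣ) ℕ := divisibleByOfSMulRightSurj _ _ hpow
  let _ : DivisibleBy (Additive Lˣ) ℤ := AddGroup.divisibleByIntOfDivisibleByNat _
  obtain ⟨κ, hκ⟩ := (Module.Baer.of_divisible (Additive Lˣ)).extension_property_addMonoidHom
    f.toAdditive hf g.toAdditive
  exact ⟨MonoidHom.toAdditive.symm κ, MonoidHom.ext fun x => DFunLike.congr_fun hκ x⟩

theorem not_isUnit_add_of_dvd_or_dvd {R : Type*} [CommSemiring R] {a b : R} (ha : ¬IsUnit a)
    (hb : ¬IsUnit b) (h : a ∣ b ∨ b ∣ a) : ¬IsUnit (a + b) := by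
  rcases h with h | h
  · exact fun hu => ha (isUnit_of_dvd_unit (dvd_add dvd_rfl h) hu)
  · exact fun hu => hb (isUnit_of_dvd_unit (dvd_add h dvd_rfl) hu)

section Graded

open DirectSum SetLike

variable {ι R σ : Type*} [CommRing R] [SetLike σ R] [AddSubmonoidClass σ R]

/-- A graded ring whose homogeneous elements are totally ordered by divisibility: the graded
analogue of `PreValuationRing`. -/
class IsGradedPreValuationRing (𝒜 : ι → σ) : Prop where
  dvd_total : ∀ {a b : R}, IsHomogeneousElem 𝒜 a → IsHomogeneousElem 𝒜 b → a ∣ b ∨ b ∣ a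

/-- The ideal generated by the homogeneous nonunits: the graded analogue of the maximal ideal of a
local ring. -/
def homogeneousNonunits (𝒜 : ι → σ) : Ideal R :=
  Ideal.span {a | IsHomogeneousElem 𝒜 a ∧ ¬IsUnit a}

variable (𝒜 : ι → σ)

section AddMonoid

variable [DecidableEq ι] [AddMonoid ι] [GradedRing 𝒜]

theorem exists_decompose_ne_zero_dvd [IsGradedPreValuationRing 𝒜] {r : R} (hr : r ≠ 0) :
    ∃ i, (decompose 𝒜 r i : R) ≠ 0 ∧ (decompose 𝒜 r i : R) ∣ r := by
  classical
  have hsupp : (decompose 𝒜 r).support.Nonempty := by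
    rw [Finset.nonempty_iff_ne_empty, Ne, DFinsupp.support_eq_empty]
    exact (EmbeddingLike.map_ne_zero_iff (f := decomposeAddEquiv 𝒜)).2 hr
  obtain ⟨i, hi, hmin⟩ :=
    Finset.exists_minimalFor (fun i => Associates.mk (decompose 𝒜 r i : R)) _ hsupp
  refine ⟨i, by simpa using hi, ?_⟩
  conv_rhs => rw [← sum_support_decompose 𝒜 r]
  refine Finset.dvd_sum fun j hj => ?_
  exact (IsGradedPreValuationRing.dvd_total (𝒜 := 𝒜) ⟨i, (decompose 𝒜 r i).2⟩
    ⟨j, (decompose 𝒜 r j).2⟩).elim id fun h =>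
      Associates.mk_le_mk_iff_dvd.1 (hmin hj (Associates.mk_le_mk_iff_dvd.2 h))

variable {𝒜} in
theorem not_isUnit_decompose_add [IsGradedPreValuationRing 𝒜] {i : ι} {r s : R}
    (hr : ¬IsUnit (decompose 𝒜 r i : R)) (hs : ¬IsUnit (decompose 𝒜 s i : R)) :
    ¬IsUnit (decompose 𝒜 (r + s) i : R) := by
  rw [decompose_add, DirectSum.add_apply, AddMemClass.coe_add]
  exact not_isUnit_add_of_dvd_or_dvd hr hs <|
    IsGradedPreValuationRing.dvd_total (𝒜 := 𝒜) ⟨i, SetLike.coe_mem _⟩ ⟨i, SetLike.coe_mem _⟩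

variable {𝒜} in
theorem not_isUnit_decompose_zero_mul [Nontrivial R] [IsGradedPreValuationRing 𝒜] {a : R}
    (ha : IsHomogeneousElem 𝒜 a) (hau : ¬IsUnit a) (r : R) :
    ¬IsUnit (decompose 𝒜 (r * a) 0 : R) := by
  obtain ⟨i, ha⟩ := ha
  induction r using Decomposition.inductionOn 𝒜 with
  | zero => simp
  | @homogeneous j r =>
    by_cases hji : j + i = 0
    · rw [← hji, decompose_of_mem_same 𝒜 (mul_mem_graded r.2 ha)]
      exact fun hu => hau (isUnit_of_mul_isUnit_right hu)
    · rw [decompose_of_mem_ne 𝒜 (mul_mem_graded r.2 ha) hji]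
      exact not_isUnit_zero
  | add r s hr hs =>
    rw [add_mul]
    exact not_isUnit_decompose_add hr hs

variable {𝒜} in
theorem not_isUnit_decompose_zero [Nontrivial R] [IsGradedPreValuationRing 𝒜] {r : R}
    (hr : r ∈ homogeneousNonunits 𝒜) : ¬IsUnit (decompose 𝒜 r 0 : R) := by
  induction hr using Submodule.closure_induction with
  | zero => simp
  | add r s _ _ hr hs => exact not_isUnit_decompose_add hr hs
  | smul_mem r a ha => exact not_isUnit_decompose_zero_mul ha.1 ha.2 r

theorem homogeneousNonunits_ne_top [Nontrivial R] [IsGradedPreValuationRing 𝒜] :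
    homogeneousNonunits 𝒜 ≠ ⊤ := by
  rw [Ideal.ne_top_iff_one]
  intro h
  have h1 := not_isUnit_decompose_zero h
  rw [decompose_of_mem_same 𝒜 (one_mem_graded 𝒜)] at h1
  exact h1 isUnit_one

end AddMonoid

theorem exists_isHomogeneousElem_mul_notMem_homogeneousNonunits [DecidableEq ι]
    [AddLeftCancelMonoid ι] [GradedRing 𝒜] [IsDomain R] [IsGradedPreValuationRing 𝒜] {r : R}
    (hr : r ≠ 0) :
    ∃ a e : R, IsHomogeneousElem 𝒜 a ∧ e ∉ homogeneousNonunits 𝒜 ∧ r = a * e := by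
  obtain ⟨i, hi, e, he⟩ := exists_decompose_ne_zero_dvd 𝒜 hr
  refine ⟨_, e, ⟨i, SetLike.coe_mem _⟩, fun hmem => not_isUnit_decompose_zero hmem ?_, he⟩
  have hcomp : (decompose 𝒜 r i : R) = decompose 𝒜 r i * decompose 𝒜 e 0 := by
    conv_lhs => rw [he]
    rw [← coe_decompose_mul_add_of_left_mem 𝒜 (SetLike.coe_mem (decompose 𝒜 r i)), add_zero]
  rw [(mul_eq_left₀ hi).1 hcomp.symm]
  exact isUnit_one

theorem preValuationRing_localization_homogeneousNonunits [DecidableEq ι]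
    [AddLeftCancelMonoid ι] [GradedRing 𝒜] [IsDomain R] [IsGradedPreValuationRing 𝒜]
    [(homogeneousNonunits 𝒜).IsPrime] :
    PreValuationRing (Localization.AtPrime (homogeneousNonunits 𝒜)) := by
  let toLoc := algebraMap R (Localization.AtPrime (homogeneousNonunits 𝒜))
  have hunit {e : R} (he : e ∉ homogeneousNonunits 𝒜) : IsUnit (toLoc e) :=
    IsLocalization.map_units _ (⟨e, he⟩ : (homogeneousNonunits 𝒜).primeCompl)
  have hassoc (z : Localization.AtPrime (homogeneousNonunits 𝒜)) :
      ∃ a, IsHomogeneousElem 𝒜 a ∧ Associated (toLoc a) z := by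
    obtain ⟨⟨r, d⟩, hz⟩ := IsLocalization.surj (homogeneousNonunits 𝒜).primeCompl z
    have hrz : Associated (toLoc r) z := hz ▸ associated_mul_unit_left _ _ (hunit d.2)
    rcases eq_or_ne r 0 with rfl | hr
    · exact ⟨0, ⟨0, zero_mem _⟩, hrz⟩
    · obtain ⟨a, e, ha, he, rfl⟩ :=
        exists_isHomogeneousElem_mul_notMem_homogeneousNonunits 𝒜 hr
      refine ⟨a, ha, .trans ?_ hrz⟩
      rw [map_mul]
      exact (associated_mul_unit_left _ _ (hunit he)).symm
  refine PreValuationRing.iff_dvd_total.2 ⟨fun x y => ?_⟩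
  obtain ⟨a, ha, hax⟩ := hassoc x
  obtain ⟨b, hb, hby⟩ := hassoc y
  rw [← hax.dvd_iff_dvd_left, ← hby.dvd_iff_dvd_right, ← hby.dvd_iff_dvd_left,
    ← hax.dvd_iff_dvd_right]
  exact (IsGradedPreValuationRing.dvd_total ha hb).imp (map_dvd toLoc) (map_dvd toLoc)

variable {𝒜} in
theorem exists_mem_neg_mul_eq_one [DecidableEq ι] [AddGroup ι] [GradedRing 𝒜] {i : ι} {a : R}
    (ha : a ∈ 𝒜 i) (hau : IsUnit a) : ∃ b ∈ 𝒜 (-i), a * b = 1 := by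
  obtain ⟨b, hab⟩ := hau.exists_right_inv
  refine ⟨decompose 𝒜 b (-i), SetLike.coe_mem _, ?_⟩
  rw [← coe_decompose_mul_add_of_left_mem 𝒜 ha, add_neg_cancel, hab,
    decompose_of_mem_same 𝒜 (one_mem_graded 𝒜)]

section Ordered

variable [AddCommMonoid ι] [LinearOrder ι] [IsOrderedCancelAddMonoid ι] [GradedRing 𝒜]

theorem isDomain_of_isHomogeneousElem_mul_ne_zero [Nontrivial R]
    (h : ∀ {a b : R}, IsHomogeneousElem 𝒜 a → IsHomogeneousElem 𝒜 b → a ≠ 0 → b ≠ 0 → a * b ≠ 0) :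
    IsDomain R := by
  have : (⊥ : Ideal R).IsPrime :=
    (HomogeneousIdeal.isHomogeneous (⊥ : HomogeneousIdeal 𝒜)).isPrime_of_homogeneous_mem_or_mem
      bot_ne_top fun {a b} ha hb hab => by
        by_contra! hne
        exact h ha hb hne.1 hne.2 hab
  exact IsDomain.of_bot_isPrime R

theorem homogeneousNonunits_isPrime [Nontrivial R] [IsGradedPreValuationRing 𝒜] :
    (homogeneousNonunits 𝒜).IsPrime := by
  refine (Ideal.homogeneous_span 𝒜 _ fun a ha => ha.1).isPrime_of_homogeneous_mem_or_mem
    (homogeneousNonunits_ne_top 𝒜) fun {a b} ha hb hab => ?_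
  by_contra! hne
  have hunit {c : R} (hc : IsHomogeneousElem 𝒜 c) (hcm : c ∉ homogeneousNonunits 𝒜) : IsUnit c :=
    by_contra fun hu => hcm (Ideal.subset_span ⟨hc, hu⟩)
  exact homogeneousNonunits_ne_top 𝒜 <|
    Ideal.eq_top_of_isUnit_mem _ hab ((hunit ha hne.1).mul (hunit hb hne.2))

end Ordered

end Graded

section Tensor

open scoped MonoidAlgebra

variable {M₀ M A : Type*} [CommMonoid M₀] [CommMonoid M] [CommRing A] [Algebra ℤ[M₀] A]
  [Algebra ℤ[M₀] ℤ[M]]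

variable (M₀ M A) in
/-- The canonical monoid homomorphism `m ↦ 1 ⊗ m`. -/
noncomputable def oneTMulOf : M →* A ⊗[ℤ[M₀]] ℤ[M] :=
  (Algebra.TensorProduct.includeRight (R := ℤ[M₀]) (A := A) (B := ℤ[M])).toMonoidHom.comp
    (MonoidAlgebra.of ℤ M)

theorem oneTMulOf_apply (m : M) :
    oneTMulOf M₀ M A m = (1 : A) ⊗ₜ[ℤ[M₀]] MonoidAlgebra.of ℤ M m :=
  rfl

theorem span_range_oneTMulOf : Submodule.span A (Set.range (oneTMulOf M₀ M A)) = ⊤ := by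
  refine Submodule.eq_top_iff'.2 fun r => ?_
  induction r using TensorProduct.induction_on with
  | zero => exact zero_mem _
  | add r s hr hs => exact add_mem hr hs
  | tmul a x =>
    rw [← mul_one a, ← smul_eq_mul, ← TensorProduct.smul_tmul']
    refine Submodule.smul_mem _ a ?_
    induction x using MonoidAlgebra.induction_on with
    | of m => exact Submodule.subset_span ⟨m, rfl⟩
    | add x y hx hy => rw [TensorProduct.tmul_add]; exact add_mem hx hy
    | smul n x hx => rw [TensorProduct.tmul_smul]; exact zsmul_mem hx n

variable {j : M₀ →* M}
  (hj : ∀ x, algebraMap ℤ[M₀] ℤ[M] (MonoidAlgebra.of ℤ M₀ x) = MonoidAlgebra.of ℤ M (j x))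

include hj

theorem oneTMulOf_map_eq_algebraMap (x : M₀) :
    oneTMulOf M₀ M A (j x) =
      algebraMap A (A ⊗[ℤ[M₀]] ℤ[M]) (algebraMap ℤ[M₀] A (MonoidAlgebra.of ℤ M₀ x)) := by
  rw [oneTMulOf_apply, ← hj, Algebra.TensorProduct.algebraMap_apply, Algebra.algebraMap_self_apply,
    Algebra.algebraMap_eq_smul_one, Algebra.algebraMap_eq_smul_one, TensorProduct.smul_tmul]

theorem exists_algHom_oneTMulOf {C : Type*} [CommRing C] [Algebra A C] {τ : M →* C}
    (hτ : ∀ x, τ (j x) = algebraMap A C (algebraMap ℤ[M₀] A (MonoidAlgebra.of ℤ M₀ x))) :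
    ∃ F : A ⊗[ℤ[M₀]] ℤ[M] →ₐ[A] C, ∀ m, F (oneTMulOf M₀ M A m) = τ m := by
  let _ : Algebra ℤ[M₀] C := ((algebraMap A C).comp (algebraMap ℤ[M₀] A)).toAlgebra
  have : IsScalarTower ℤ[M₀] A C := .of_algebraMap_eq fun _ => rfl
  let evalτ : ℤ[M] →+* C := MonoidAlgebra.lift ℤ C M τ
  have hevalτ (m : M) : evalτ (MonoidAlgebra.of ℤ M m) = τ m := MonoidAlgebra.lift_of ..
  have hcomm : evalτ.comp (algebraMap ℤ[M₀] ℤ[M]) = algebraMap ℤ[M₀] C :=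
    MonoidAlgebra.ringHom_ext' (RingHom.ext_int _ _) <| MonoidHom.ext fun x =>
      (congrArg evalτ (hj x)).trans <| (hevalτ (j x)).trans (hτ x)
  let evalτₐ : ℤ[M] →ₐ[ℤ[M₀]] C := { evalτ with commutes' := DFunLike.congr_fun hcomm }
  refine ⟨Algebra.TensorProduct.lift (Algebra.ofId A C) evalτₐ fun _ _ => .all _ _, fun m => ?_⟩
  rw [oneTMulOf_apply, Algebra.TensorProduct.lift_tmul, map_one, one_mul]
  exact hevalτ m

end Tensor

section Weight

open DirectSum

variable {M Q A R : Type*} [CommMonoid M] [CommMonoid Q] [CommRing A] [CommRing R] [Algebra A R]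

variable (A) in
/-- The homogeneous component of degree `i` when `R` is generated as an `A`-module by monomials
`t m`, the monomial `t m` being placed in degree `deg m`. Degrees are written multiplicatively in
`Q`, hence the index type `Additive Q`. -/
def weightSubmodule (t : M →* R) (deg : M →* Q) (i : Additive Q) : Submodule A R :=
  Submodule.span A (t '' {m | deg m = i.toMul})

variable {t : M →* R} {deg : M →* Q}

theorem mem_weightSubmodule (m : M) : t m ∈ weightSubmodule A t deg (.ofMul (deg m)) :=
  Submodule.subset_span ⟨m, rfl, rfl⟩

instance weightSubmodule_gradedMonoid : SetLike.GradedMonoid (weightSubmodule A t deg) where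
  one_mem := Submodule.subset_span ⟨1, map_one deg, map_one t⟩
  mul_mem i j a b ha hb := by
    have hab := Submodule.mul_mem_mul ha hb
    rw [weightSubmodule, weightSubmodule, Submodule.span_mul_span] at hab
    refine Submodule.span_mono ?_ hab
    rintro _ ⟨_, ⟨m, hm, rfl⟩, _, ⟨m', hm', rfl⟩, rfl⟩
    exact ⟨m * m', by rw [Set.mem_ofPred_eq, map_mul, hm, hm', toMul_add], map_mul t m m'⟩

theorem eq_zero_or_exists_of_mem_weightSubmodule
    (hdvd : ∀ m m', deg m = deg m' → ∃ a : A, t m = a • t m' ∨ t m' = a • t m)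
    (hsmul : ∀ (a : A) m, a = 0 ∨ ∃ m', deg m' = deg m ∧ t m' = a • t m)
    {i : Additive Q} {r : R} (hr : r ∈ weightSubmodule A t deg i) :
    r = 0 ∨ ∃ m, deg m = i.toMul ∧ t m = r := by
  have hsmul' (a : A) {m : M} (hm : deg m = i.toMul) :
      a • t m = 0 ∨ ∃ m', deg m' = i.toMul ∧ t m' = a • t m :=
    (hsmul a m).imp (fun ha => by rw [ha, zero_smul]) fun ⟨m', hm', h⟩ => ⟨m', hm'.trans hm, h⟩
  induction hr using Submodule.span_induction with
  | mem r hr => exact .inr hr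
  | zero => exact .inl rfl
  | smul a r _ hr =>
    rcases hr with rfl | ⟨m, hm, rfl⟩
    · exact .inl (smul_zero a)
    · exact hsmul' a hm
  | add r s _ _ hr hs =>
    rcases hr with rfl | ⟨m, hm, rfl⟩
    · rwa [zero_add]
    rcases hs with rfl | ⟨m', hm', rfl⟩
    · exact .inr ⟨m, hm, (add_zero _).symm⟩
    obtain ⟨a, h | h⟩ := hdvd m m' (hm.trans hm'.symm)
    · rw [h, ← one_smul A (t m'), smul_smul, mul_one, ← add_smul]
      exact hsmul' _ hm'
    · rw [h, ← one_smul A (t m), smul_smul, mul_one, ← add_smul]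
      exact hsmul' _ hm

variable [DecidableEq (Additive Q)]

variable (A t deg) in
/-- The map sending `m` to the monomial `t m`, seen in its homogeneous component. -/
def weightMonomial : M →* ⨁ i, weightSubmodule A t deg i where
  toFun m := of (fun i => weightSubmodule A t deg i) (.ofMul (deg m)) ⟨t m, mem_weightSubmodule m⟩
  map_one' := of_eq_of_gradedMonoid_eq <|
    Sigma.subtype_ext (congrArg Additive.ofMul (map_one deg)) (map_one t)
  map_mul' m m' := by
    rw [of_mul_of]
    exact of_eq_of_gradedMonoid_eq <|
      Sigma.subtype_ext (congrArg Additive.ofMul (map_mul deg m m')) (map_mul t m m')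

theorem weightMonomial_eq_algebraMap {m : M} {a : A} (hm : deg m = 1)
    (hma : t m = algebraMap A R a) : weightMonomial A t deg m = algebraMap A _ a :=
  of_eq_of_gradedMonoid_eq <| Sigma.subtype_ext (congrArg Additive.ofMul hm) hma

theorem nonempty_gradedAlgebra_weightSubmodule (hspan : Submodule.span A (Set.range t) = ⊤)
    (F : R →ₐ[A] ⨁ i, weightSubmodule A t deg i) (hF : ∀ m, F (t m) = weightMonomial A t deg m) :
    Nonempty (GradedAlgebra (weightSubmodule A t deg)) := by
  have hcoe : (coeAlgHom (weightSubmodule A t deg)).comp F = .id A R :=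
    AlgHom.toLinearMap_injective <| LinearMap.ext_on_range hspan fun m => by
      change coeAlgHom (weightSubmodule A t deg) (F (t m)) = t m
      rw [hF]
      exact coeAlgHom_of ..
  have hrange (i : Additive Q) : weightSubmodule A t deg i ≤
      (lof A _ (fun i => weightSubmodule A t deg i) i).range.comap F.toLinearMap :=
    Submodule.span_le.2 <| by
      rintro _ ⟨m, rfl, rfl⟩
      exact ⟨⟨t m, mem_weightSubmodule m⟩, (hF m).symm⟩
  refine ⟨.ofAlgHom _ F hcoe fun i ⟨r, hr⟩ => ?_⟩
  obtain ⟨y, hy : lof A _ _ i y = F r⟩ := hrange i hr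
  have hyr : (y : R) = r := by
    have hFr : coeAlgHom (weightSubmodule A t deg) (F r) = r := DFunLike.congr_fun hcoe r
    rw [← hFr, ← hy]
    exact (coeAlgHom_of ..).symm
  subst hyr
  exact hy.symm

end Weight

section Monomial

open SetLike

variable {ι M R σ : Type*} [CommMonoid M] [CommRing R] [SetLike σ R] {𝒜 : ι → σ} {t : M →* R}

theorem isGradedPreValuationRing_of_monoidHom (hM : ∀ m m' : M, m ∣ m' ∨ m' ∣ m)
    (h𝒜 : ∀ a, IsHomogeneousElem 𝒜 a → a = 0 ∨ ∃ m, t m = a) : IsGradedPreValuationRing 𝒜 where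
  dvd_total {a b} ha hb := by
    rcases h𝒜 a ha with rfl | ⟨m, rfl⟩
    · exact .inr (dvd_zero b)
    rcases h𝒜 b hb with rfl | ⟨m', rfl⟩
    · exact .inl (dvd_zero _)
    exact (hM m m').imp (map_dvd t) (map_dvd t)

theorem homogeneousNonunits_eq_span_image [IsLocalHom t] (ht : ∀ m, IsHomogeneousElem 𝒜 (t m))
    (h𝒜 : ∀ a, IsHomogeneousElem 𝒜 a → a = 0 ∨ ∃ m, t m = a) :
    homogeneousNonunits 𝒜 = Ideal.span (t '' {m | ¬IsUnit m}) := by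
  refine le_antisymm (Ideal.span_le.2 ?_) (Ideal.span_mono ?_)
  · rintro a ⟨ha, hau⟩
    rcases h𝒜 a ha with rfl | ⟨m, rfl⟩
    · exact zero_mem _
    · exact Ideal.subset_span ⟨m, fun hm => hau (hm.map t), rfl⟩
  · rintro _ ⟨m, hm, rfl⟩
    exact ⟨ht m, fun hu => hm (hu.of_map t m)⟩

variable [AddSubmonoidClass σ R]

theorem isDomain_of_monoidHom [AddCommMonoid ι] [LinearOrder ι] [IsOrderedCancelAddMonoid ι]
    [GradedRing 𝒜] [Nontrivial R] (ht : ∀ m, t m ≠ 0)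
    (h𝒜 : ∀ a, IsHomogeneousElem 𝒜 a → a = 0 ∨ ∃ m, t m = a) : IsDomain R := by
  refine isDomain_of_isHomogeneousElem_mul_ne_zero 𝒜 fun {a b} ha hb ha0 hb0 => ?_
  obtain ⟨m, rfl⟩ := (h𝒜 a ha).resolve_left ha0
  obtain ⟨m', rfl⟩ := (h𝒜 b hb).resolve_left hb0
  exact map_mul t m m' ▸ ht (m * m')

theorem isLocalHom_of_isUnit_of_map_eq_one {Q : Type*} [CommGroup Q] [DecidableEq (Additive Q)]
    [Nontrivial R] {𝒜 : Additive Q → σ} [GradedRing 𝒜] {deg : M →* Q}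
    (ht : ∀ m, t m ∈ 𝒜 (.ofMul (deg m)))
    (h𝒜 : ∀ {i a}, a ∈ 𝒜 i → a = 0 ∨ ∃ m, deg m = i.toMul ∧ t m = a)
    (h1 : ∀ m, deg m = 1 → t m = 1 → IsUnit m) : IsLocalHom t where
  map_nonunit m hm := by
    obtain ⟨b, hb, hmb⟩ := exists_mem_neg_mul_eq_one (ht m) hm
    obtain ⟨m', hm', rfl⟩ := (h𝒜 hb).resolve_left (right_ne_zero_of_mul_eq_one hmb)
    refine isUnit_of_mul_isUnit_left (h1 (m * m') ?_ ?_)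
    · rw [map_mul, hm', toMul_neg, toMul_ofMul, mul_inv_cancel]
    · rw [map_mul, hmb]

end Monomial

section TensorGrading

open DirectSum
open scoped MonoidAlgebra

theorem nonempty_gradedAlgebra_oneTMulOf {M₀ M A Q : Type*} [CommMonoid M₀] [CommMonoid M]
    [CommMonoid Q] [DecidableEq (Additive Q)] [CommRing A] [Algebra ℤ[M₀] A] [Algebra ℤ[M₀] ℤ[M]]
    {j : M₀ →* M}
    (hj : ∀ x, algebraMap ℤ[M₀] ℤ[M] (MonoidAlgebra.of ℤ M₀ x) = MonoidAlgebra.of ℤ M (j x))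
    {deg : M →* Q} (hdeg : ∀ x, deg (j x) = 1) :
    Nonempty (GradedAlgebra (weightSubmodule A (oneTMulOf M₀ M A) deg)) := by
  -- Instance search finds this ring structure over a variable ring but not over a tensor product.
  let _ : CommRing (⨁ i, weightSubmodule A (oneTMulOf M₀ M A) deg i) :=
    @DirectSum.commRing _ _ _ _ _ (SetLike.gcommRing _)
  obtain ⟨F, hF⟩ := exists_algHom_oneTMulOf hj
    (C := ⨁ i, weightSubmodule A (oneTMulOf M₀ M A) deg i) (τ := weightMonomial A _ deg)
    fun x => weightMonomial_eq_algebraMap (hdeg x) (oneTMulOf_map_eq_algebraMap hj x)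
  exact nonempty_gradedAlgebra_weightSubmodule span_range_oneTMulOf F hF

end TensorGrading

section Submonoid

variable {Λ : Type*} [CommGroup Λ] {V : Submonoid Λ}

theorem dvd_or_dvd_of_forall_mem_or_inv_mem (hV : ∀ x : Λ, x ∈ V ∨ x⁻¹ ∈ V) (v w : V) :
    v ∣ w ∨ w ∣ v := by
  rcases hV ((v : Λ)⁻¹ * w) with h | h
  · exact .inl ⟨⟨_, h⟩, Subtype.ext (mul_inv_cancel_left _ _).symm⟩
  · exact .inr ⟨⟨_, h⟩, Subtype.ext (by simp)⟩

theorem isUnit_iff_inv_mem (v : V) : IsUnit v ↔ (v : Λ)⁻¹ ∈ V := by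
  refine ⟨fun h => ?_, fun h => .of_mul_eq_one ⟨_, h⟩ (Subtype.ext (mul_inv_cancel _))⟩
  obtain ⟨w, hw⟩ := h.exists_right_inv
  rw [inv_eq_of_mul_eq_one_right (congrArg Subtype.val hw)]
  exact w.2

end Submonoid

section Extension

open scoped MonoidAlgebra

/-- The class of an element of `V` modulo `Kˣ`, by which the monomials `1 ⊗ v` are graded. -/
abbrev quotientDegree {G Λ : Type*} [Group G] [CommGroup Λ] (f : G →* Λ) (V : Submonoid Λ) :
    V →* Λ ⧸ f.range :=
  (QuotientGroup.mk' f.range).comp V.subtype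

variable {A K Λ : Type*} [CommRing A] [Field K] [Algebra A K] [CommGroup Λ] {f : Kˣ →* Λ}
  {V₀ V : Submonoid Λ}
  (hV₀ : V₀ = Submonoid.map f
      (Submonoid.comap (Units.coeHom K) (algebraMap A K).range.toSubmonoid))

include hV₀

theorem mem_of_algebraMap_eq {u : Kˣ} {a : A} (hua : algebraMap A K a = u) : f u ∈ V₀ :=
  hV₀ ▸ ⟨u, ⟨a, hua⟩, rfl⟩

theorem quotientDegree_inclusion (hle : V₀ ≤ V) (x : V₀) :
    quotientDegree f V (Submonoid.inclusion hle x) = 1 := by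
  obtain ⟨x, hx⟩ := x
  obtain ⟨u, -, rfl⟩ := hV₀ ▸ hx
  exact (QuotientGroup.eq_one_iff _).2 ⟨u, rfl⟩

variable {hle : V₀ ≤ V} [Algebra ℤ[V₀] A] [Algebra ℤ[V₀] ℤ[V]]
  (hα : ∀ (x : V₀) (u : Kˣ) (a : A), f u = x → algebraMap A K a = u →
    algebraMap ℤ[V₀] A (MonoidAlgebra.of ℤ V₀ x) = a)
  (hM : ∀ x : V₀, algebraMap ℤ[V₀] ℤ[V] (MonoidAlgebra.of ℤ V₀ x) =
    MonoidAlgebra.of ℤ V (Submonoid.inclusion hle x))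

include hα hM

theorem exists_algHom_algebraicClosure (hf : Function.Injective f) :
    ∃ (F : A ⊗[ℤ[V₀]] ℤ[V] →ₐ[A] AlgebraicClosure K) (κ : Λ →* (AlgebraicClosure K)ˣ),
      (∀ v, F (oneTMulOf V₀ V A v) = κ v) ∧ Function.Injective (κ.comp f) := by
  obtain ⟨κ, hκ⟩ := exists_units_monoidHom_comp_eq hf
    (Units.map (algebraMap K (AlgebraicClosure K) : K →* AlgebraicClosure K))
  obtain ⟨F, hF⟩ := exists_algHom_oneTMulOf hM (A := A)
    (τ := ((Units.coeHom (AlgebraicClosure K)).comp κ).comp V.subtype) fun ⟨x, hx⟩ => by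
      obtain ⟨u, ⟨a, hua⟩, rfl⟩ := hV₀ ▸ hx
      rw [hα ⟨f u, hx⟩ u a rfl hua, IsScalarTower.algebraMap_apply A K, hua]
      exact congrArg Units.val (DFunLike.congr_fun hκ u)
  exact ⟨F, κ, hF, hκ ▸ Units.map_injective (algebraMap K (AlgebraicClosure K)).injective⟩

theorem oneTMulOf_ne_zero (hf : Function.Injective f) (v : V) : oneTMulOf V₀ V A v ≠ 0 := by
  obtain ⟨F, κ, hF, -⟩ := exists_algHom_algebraicClosure hV₀ hα hM hf
  exact fun h => (κ v).ne_zero (by rw [← hF, h, map_zero])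

theorem eq_one_of_oneTMulOf_eq_one (hf : Function.Injective f) {v : V}
    (hv : quotientDegree f V v = 1) (h1 : oneTMulOf V₀ V A v = 1) : v = 1 := by
  obtain ⟨F, κ, hF, hκ⟩ := exists_algHom_algebraicClosure hV₀ hα hM hf
  obtain ⟨u, hu⟩ := (QuotientGroup.eq_one_iff _).1 hv
  have hκv : κ v = 1 := Units.ext <| by rw [← hF, h1, map_one, Units.val_one]
  have hu1 : u = 1 := hκ <| by rw [MonoidHom.comp_apply, hu, map_one]; exact hκv
  exact Subtype.ext <| by rw [OneMemClass.coe_one, ← map_one f, ← hu1, hu]; rfl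

theorem oneTMulOf_eq_smul {u : Kˣ} {a : A} (hua : algebraMap A K a = u) {v w : V}
    (hw : (w : Λ) = v * f u) : oneTMulOf V₀ V A w = a • oneTMulOf V₀ V A v := by
  let x : V₀ := ⟨f u, mem_of_algebraMap_eq hV₀ hua⟩
  obtain rfl : w = v * Submonoid.inclusion hle x := Subtype.ext hw
  rw [map_mul, oneTMulOf_map_eq_algebraMap hM, hα x u a rfl hua, mul_comm]
  exact (Algebra.smul_def a _).symm

theorem eq_zero_or_exists_oneTMulOf_eq [IsDomain A] [ValuationRing A] [IsFractionRing A K]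
    {i : Additive (Λ ⧸ f.range)} {r : A ⊗[ℤ[V₀]] ℤ[V]}
    (hr : r ∈ weightSubmodule A (oneTMulOf V₀ V A) (quotientDegree f V) i) :
    r = 0 ∨ ∃ v, quotientDegree f V v = i.toMul ∧ oneTMulOf V₀ V A v = r := by
  refine eq_zero_or_exists_of_mem_weightSubmodule (fun v w hvw => ?_) (fun a v => ?_) hr
  · obtain ⟨u, hu⟩ := QuotientGroup.eq.1 hvw
    obtain ⟨a, ha⟩ | ⟨a, ha⟩ := ValuationRing.isInteger_or_isInteger A (u : K)
    · exact ⟨a, .inr (oneTMulOf_eq_smul hV₀ hα hM ha (eq_mul_of_inv_mul_eq hu.symm))⟩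
    · refine ⟨a, .inl (oneTMulOf_eq_smul hV₀ hα hM (ha.trans (Units.val_inv_eq_inv_val u).symm) ?_)⟩
      rw [map_inv, eq_mul_inv_iff_mul_eq, hu]
      exact mul_inv_cancel_left _ _
  · refine or_iff_not_imp_left.2 fun ha => ?_
    let u := Units.mk0 (algebraMap A K a) ((FaithfulSMul.algebraMap_eq_zero_iff A K).not.2 ha)
    have hu : f u ∈ V₀ := mem_of_algebraMap_eq hV₀ (a := a) rfl
    refine ⟨v * Submonoid.inclusion hle ⟨f u, hu⟩, ?_,
      oneTMulOf_eq_smul hV₀ hα hM (u := u) rfl rfl⟩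
    rw [map_mul, quotientDegree_inclusion hV₀ hle, mul_one]

end Extension

theorem tensor_monoidAlgebra_localization_valuationRing_general
    {A K Λ : Type*} [CommRing A] [IsDomain A] [ValuationRing A]
    [Field K] [Algebra A K] [IsFractionRing A K]
    [CommGroup Λ] (f : Kˣ →* Λ) (hf : Function.Injective f) [IsMulTorsionFree (Λ ⧸ f.range)]
    (V₀ : Submonoid Λ)
    (hV₀ : V₀ = Submonoid.map f
      (Submonoid.comap (Units.coeHom K) (algebraMap A K).range.toSubmonoid))
    (V : Submonoid Λ) (hVval : ∀ x : Λ, x ∈ V ∨ x⁻¹ ∈ V)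
    (hle : V₀ ≤ V)
    [Algebra (MonoidAlgebra ℤ V₀) A]
    (hα : ∀ (x : V₀) (u : Kˣ) (a : A), f u = x → algebraMap A K a = u →
        algebraMap (MonoidAlgebra ℤ V₀) A (MonoidAlgebra.of ℤ V₀ x) = a)
    [Algebra (MonoidAlgebra ℤ V₀) (MonoidAlgebra ℤ V)]
    (hM : ∀ x : V₀, algebraMap (MonoidAlgebra ℤ V₀) (MonoidAlgebra ℤ V) (MonoidAlgebra.of ℤ V₀ x) =
      MonoidAlgebra.of ℤ V (Submonoid.inclusion hle x))
    (𝔭 : Ideal (A ⊗[MonoidAlgebra ℤ V₀] MonoidAlgebra ℤ V))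
    (h𝔭 : 𝔭 = Ideal.span {r | ∃ v : V, (v : Λ)⁻¹ ∉ V ∧ r = 1 ⊗ₜ MonoidAlgebra.of ℤ V v}) :
    ∃ _ : 𝔭.IsPrime, ∃ _ : IsDomain (Localization.AtPrime 𝔭),
      ValuationRing (Localization.AtPrime 𝔭) := by
  have ht := oneTMulOf_ne_zero hV₀ hα hM hf
  have : Nontrivial (A ⊗[MonoidAlgebra ℤ V₀] MonoidAlgebra ℤ V) := ⟨_, _, ht 1⟩
  obtain ⟨_, _⟩ := exists_linearOrder_isOrderedAddMonoid (Additive (Λ ⧸ f.range))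
  let 𝒜 := weightSubmodule A (oneTMulOf V₀ V A) (quotientDegree f V)
  obtain ⟨_⟩ := nonempty_gradedAlgebra_oneTMulOf hM (A := A) (quotientDegree_inclusion hV₀ hle)
  have h𝒜 (r) : SetLike.IsHomogeneousElem 𝒜 r → r = 0 ∨ ∃ v, oneTMulOf V₀ V A v = r :=
    fun ⟨_, hr⟩ => (eq_zero_or_exists_oneTMulOf_eq hV₀ hα hM hr).imp_right fun ⟨v, hv⟩ => ⟨v, hv.2⟩
  have := isDomain_of_monoidHom ht h𝒜
  have := isGradedPreValuationRing_of_monoidHom (dvd_or_dvd_of_forall_mem_or_inv_mem hVval) h𝒜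
  have : IsLocalHom (oneTMulOf V₀ V A) := isLocalHom_of_isUnit_of_map_eq_one (𝒜 := 𝒜)
    mem_weightSubmodule (eq_zero_or_exists_oneTMulOf_eq hV₀ hα hM) fun v hv h1 =>
      eq_one_of_oneTMulOf_eq_one hV₀ hα hM hf hv h1 ▸ isUnit_one
  obtain rfl : 𝔭 = homogeneousNonunits 𝒜 := by
    rw [homogeneousNonunits_eq_span_image (fun v => ⟨_, mem_weightSubmodule v⟩) h𝒜, h𝔭]
    congr! 1
    ext r
    simp [isUnit_iff_inv_mem, oneTMulOf_apply, eq_comm]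
  have hprime := homogeneousNonunits_isPrime 𝒜
  have := preValuationRing_localization_homogeneousNonunits 𝒜
  exact ⟨hprime, inferInstance, {}⟩

/-- Let `A` be a Henselian valuation ring which is not a field, with fraction field `K`.
Let `Λ` be an abelian group containing `Kˣ` (via an injective homomorphism `f`) with
`Λ/Kˣ` free of finite rank, and let `V` be a valuative submonoid of `Λ` dominating the
valuative submonoid `V₀ := A∖{0}` of `Kˣ`.  Let `R := A ⊗_{ℤ[V₀]} ℤ[V]` (the algebra
structures being induced by `V₀ → A` and by the inclusion `V₀ ⊆ V`) and let `𝔭` be the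
ideal of `R` generated by the image of `V∖Vˣ`.  Then `𝔭` is a prime ideal of `R` and the
localization `R_𝔭` is a valuation ring. -/
theorem tensor_monoidAlgebra_localization_valuationRing
    {A K : Type} [CommRing A] [IsDomain A] [ValuationRing A] [HenselianLocalRing A]
    (hA : ¬IsField A)
    [Field K] [Algebra A K] [IsFractionRing A K]
    {Λ : Type} [CommGroup Λ] (f : Kˣ →* Λ) (hf : Function.Injective f)
    (n : ℕ) (hfree : Nonempty ((Λ ⧸ f.range) ≃* Multiplicative (Fin n → ℤ)))
    (V₀ : Submonoid Λ)
    (hV₀ : V₀ = Submonoid.map f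
      (Submonoid.comap (Units.coeHom K) (algebraMap A K).range.toSubmonoid))
    (V : Submonoid Λ) (hVval : ∀ x : Λ, x ∈ V ∨ x⁻¹ ∈ V)
    (hle : V₀ ≤ V)
    (hdom : {x : Λ | x ∈ V ∧ x⁻¹ ∈ V} ∩ (V₀ : Set Λ) = {x : Λ | x ∈ V₀ ∧ x⁻¹ ∈ V₀}) :
    ∀ [instA : Algebra (MonoidAlgebra ℤ ↥V₀) A],
      (∀ (x : ↥V₀) (u : Kˣ) (a : A), f u = (x : Λ) → algebraMap A K a = (u : K) →
        algebraMap (MonoidAlgebra ℤ ↥V₀) A (MonoidAlgebra.of ℤ ↥V₀ x) = a) →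
    ∀ [instM : Algebra (MonoidAlgebra ℤ ↥V₀) (MonoidAlgebra ℤ ↥V)],
      (∀ x : ↥V₀, algebraMap (MonoidAlgebra ℤ ↥V₀) (MonoidAlgebra ℤ ↥V)
          (MonoidAlgebra.of ℤ ↥V₀ x) = MonoidAlgebra.of ℤ ↥V (Submonoid.inclusion hle x)) →
    ∀ 𝔭 : Ideal (A ⊗[MonoidAlgebra ℤ ↥V₀] MonoidAlgebra ℤ ↥V),
      𝔭 = Ideal.span {r : A ⊗[MonoidAlgebra ℤ ↥V₀] MonoidAlgebra ℤ ↥V | ∃ v : ↥V,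
          ((v : Λ)⁻¹ ∉ V) ∧
          r = (1 : A) ⊗ₜ[MonoidAlgebra ℤ ↥V₀] MonoidAlgebra.of ℤ ↥V v} →
      ∃ hp : 𝔭.IsPrime,
        ∃ hd : IsDomain (Localization (@Ideal.primeCompl _ _ 𝔭 hp)),
          @ValuationRing (Localization (@Ideal.primeCompl _ _ 𝔭 hp)) _ hd := by
  intro instα hα instM hM 𝔭 h𝔭
  obtain ⟨e⟩ := hfree
  have := Function.Injective.isMulTorsionFree e.toMonoidHom e.injective
  exact tensor_monoidAlgebra_localization_valuationRing_general f hf V₀ hV₀ V hVval hle hα hM 𝔭 h𝔭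
end

section
/- Let L/K be a Galois extension whose Galois group is cyclic of order a prime number ℓ, and let B be the integral closure of A in L. Then for every finite subset S of B there exists an element s ∈ B such that S is contained in the A-subalgebra A[s] of B generated by s. -/
/-!
Since `A` is Henselian, the integral closure `B` of `A` in any algebraic extension `L` of `K` is a
valuation ring, so it is the unit ball of a valuation `v` of `L`, invariant under all
`K`-automorphisms. Let `ℓ = [L : K]` be prime. An element `z` is written `∑ fᵢ xⁱ` with `fᵢ ∈ K`
and `i < ℓ`, and if every term satisfies `v (fᵢ xⁱ) ≤ v (b x) ^ i` for some `b ∈ K`, then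
`z ∈ A[b x]`.

* If the residue field grows, a lift `b` of a new residue has residual degree `ℓ`, so primitive
  polynomials of degree less than `ℓ` take unit values at `b`, and `B = A[b]`.
* If the value group grows, the value group of `K` has index `ℓ` in that of `L`. The terms of `z`
  then have distinct values, so all of them have value at most `v z ≤ 1`, and `b` can be chosen so
  that `v (b x) < 1` is close enough to `1` for the finitely many terms involved.
* Otherwise the extension is immediate and no `x ∈ L ∖ K` has a best approximation in `K`. Averaging
  the conjugates of `r` (the trace divided by the degree) produces elements of `K` approximating any
  `a ∈ K` at least as well as `r` does. Hence elements of `K` come closer to `x` than any `r` of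
  degree prime to the residue characteristic does, in particular closer than every root of a
  polynomial `f` of degree less than `ℓ`. For such `a ∈ K` the constant term of the Taylor expansion
  of `f` at `a` dominates at `x - a`, and `s` is `x - a` scaled to have value `1`.
-/

open Polynomial IsLocalRing
open scoped Pointwise
open IsLocalization (IsInteger)
open MonoidWithZeroHom (valueGroup)

section LocalRing

variable {B G : Type*} [CommRing B] [Group G] [MulSemiringAction G B]

theorem exists_prodXSubSMul_eq_mul [Fintype G] (M : Ideal B) [M.IsMaximal] {c : B}
    (hsmul : ∀ g : G, g • c ≠ c → g • c ∈ M) :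
    ∃ h : B[X], prodXSubSMul G B c = (X - C c) * h ∧ h.eval 1 ∉ M := by
  classical
  refine ⟨∏ q ∈ Finset.univ.erase (QuotientGroup.mk (s := MulAction.stabilizer G c) 1),
    (X - C (MulAction.ofQuotientStabilizer G c q)), ?_, ?_⟩
  · rw [prodXSubSMul, ← Finset.mul_prod_erase _ _ (Finset.mem_univ (QuotientGroup.mk 1)),
      MulAction.ofQuotientStabilizer_mk, one_smul]
  rw [eval_prod, ‹M.IsMaximal›.isPrime.prod_mem_iff]
  rintro ⟨q, hq, hqM⟩
  induction q using Quotient.inductionOn' with | h g =>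
  have hg : g • c ≠ c := fun hg => Finset.ne_of_mem_erase hq
    (QuotientGroup.eq.mpr (by simpa using (inv_mem_iff.mpr (MulAction.mem_stabilizer_iff.mpr hg))))
  have hone : (1 : B) ∈ M := by simpa using M.add_mem hqM (hsmul g hg)
  exact ‹M.IsMaximal›.ne_top ((Ideal.eq_top_iff_one _).mpr hone)

variable [Finite G]

theorem exists_sub_one_mem_and_smul_mem (M : Ideal B) [M.IsMaximal] :
    ∃ c : B, c - 1 ∈ M ∧ MulAction.stabilizer G M ≤ MulAction.stabilizer G c ∧
      ∀ g ∉ MulAction.stabilizer G M, g • c ∈ M := by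
  classical
  cases nonempty_fintype G
  let D := MulAction.stabilizer G M
  have isMaximal_smul (g : G) : (g • M).IsMaximal :=
    Ideal.map_isMaximal_of_equiv (MulSemiringAction.toRingEquiv G B g) (p := M)
  have hsup : M ⊔ ⨅ g ∈ Finset.univ.filter (· ∉ D), g • M = ⊤ :=
    Ideal.sup_iInf_eq_top fun g hg => Ideal.IsMaximal.coprime_of_ne ‹_› (isMaximal_smul g)
      fun h => (Finset.mem_filter.mp hg).2 h.symm
  obtain ⟨m, hm, b, hb, hmb⟩ := Submodule.mem_sup.mp ((Ideal.eq_top_iff_one _).mp hsup)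
  have hb_mem (g : G) (hg : g ∉ D) : b ∈ g • M := by
    simp only [Ideal.mem_iInf, Finset.mem_filter_univ] at hb
    exact hb g hg
  have smul_mem {d : G} (hd : d ∈ D) {z : B} (hz : z ∈ M) : d • z ∈ M := by
    rw [← MulAction.mem_stabilizer_iff.mp hd]
    exact Ideal.smul_mem_pointwise_smul d z M hz
  have hb_sub (d : D) : (d : G) • b - 1 ∈ M := by
    have hd : (d : G) • m + (d : G) • b = 1 := by rw [← smul_add, hmb, smul_one]
    rw [← hd, sub_add_cancel_right]
    exact M.neg_mem (smul_mem d.2 hm)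
  have hprod : ∏ d : D, (d : G) • b - 1 ∈ M := by
    rw [← Ideal.Quotient.eq, map_prod, map_one]
    exact Finset.prod_eq_one fun d _ => Ideal.Quotient.eq.mpr (hb_sub d)
  refine ⟨∏ d : D, (d : G) • b, hprod, fun e he => ?_, fun g hg => ?_⟩
  · rw [MulAction.mem_stabilizer_iff, Finset.smul_prod']
    exact Fintype.prod_equiv (Equiv.mulLeft (⟨e, he⟩ : D)) _ _ fun d => smul_smul e (d : G) b
  · rw [Finset.smul_prod', ← Finset.mul_prod_erase _ _ (Finset.mem_univ (1 : D))]
    refine M.mul_mem_right _ ?_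
    rw [OneMemClass.coe_one, one_smul]
    exact Ideal.mem_inv_pointwise_smul_iff.mp (hb_mem g⁻¹ fun h => hg (inv_mem_iff.mp h))

variable {A : Type*} [CommRing A] [Algebra A B]

theorem under_eq_maximalIdeal [IsLocalRing A] [Algebra.IsIntegral A B] (M : Ideal B)
    [M.IsMaximal] : M.under A = maximalIdeal A :=
  eq_maximalIdeal (Ideal.isMaximal_comap_of_isIntegral_of_isMaximal M)

variable [HenselianLocalRing A] [Algebra.IsInvariant A B G] [SMulCommClass G A B]

theorem mem_range_algebraMap_of_smul_mem [IsDomain B] (M : Ideal B) [M.IsMaximal] {c : B}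
    (hc : c - 1 ∈ M) (hsmul : ∀ g : G, g • c ≠ c → g • c ∈ M) :
    c ∈ (algebraMap A B).range := by
  classical
  cases nonempty_fintype G
  have := Algebra.IsInvariant.isIntegral A B G
  have mem_iff (a : A) : algebraMap A B a ∈ M ↔ a ∈ maximalIdeal A := by
    rw [← under_eq_maximalIdeal M, Ideal.mem_comap]
  obtain ⟨f, hf, -, hmonic⟩ := lifts_and_natDegree_eq_and_monic
    ((prodXSubSMul G B c).lifts_iff_coeff_lifts.mpr fun n =>
      Algebra.IsInvariant.isInvariant (A := A) (G := G) _ (prodXSubSMul.coeff G B c · n))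
    (prodXSubSMul.monic G B c)
  obtain ⟨h, hfac, h_eval_one⟩ := exists_prodXSubSMul_eq_mul M hsmul
  have hfh : f.map (algebraMap A B) = (X - C c) * h := hf.trans hfac
  have hc' : 1 - c ∈ M := by rwa [← neg_sub, M.neg_mem_iff]
  -- `1` is a simple root of `f` modulo `M`, and the root of `f` lifting it is a conjugate of `c`.
  obtain ⟨r, hr, -⟩ := HenselianLocalRing.is_henselian f hmonic 1
    (by
      rw [← mem_iff, ← eval₂_at_apply, ← eval_map, hfh, map_one, eval_mul, eval_sub, eval_X, eval_C]
      exact M.mul_mem_right _ hc')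
    (by
      rw [← notMem_maximalIdeal, ← mem_iff, ← eval₂_at_apply, ← eval_map, ← derivative_map, hfh,
        map_one, derivative_mul, derivative_X_sub_C, one_mul, eval_add, eval_mul, eval_sub, eval_X,
        eval_C]
      exact fun hmem => h_eval_one ((M.add_mem_iff_left (M.mul_mem_right _ hc')).mp hmem))
  have hroot : (f.map (algebraMap A B)).eval (algebraMap A B r) = 0 := by
    rw [eval_map, eval₂_at_apply, hr.eq_zero, map_zero]
  rw [hf, prodXSubSMul, eval_prod, Finset.prod_eq_zero_iff] at hroot
  obtain ⟨q, -, hq⟩ := hroot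
  induction q using Quotient.inductionOn' with | h g =>
  have hrg : algebraMap A B r = g • c := by simpa [sub_eq_zero] using hq
  exact ⟨r, by rw [← inv_smul_smul g c, ← hrg, smul_algebraMap]⟩

end LocalRing

theorem isLocalRing_of_isInvariant (A B G : Type*) [CommRing A] [HenselianLocalRing A]
    [CommRing B] [IsDomain B] [Algebra A B] [Group G] [Finite G] [MulSemiringAction G B]
    [SMulCommClass G A B] [Algebra.IsInvariant A B G] : IsLocalRing B := by
  have := Algebra.IsInvariant.isIntegral A B G
  obtain ⟨M, hM⟩ := Ideal.exists_maximal B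
  refine IsLocalRing.of_unique_max_ideal ⟨M, hM, fun N hN => ?_⟩
  obtain ⟨g, rfl⟩ := Algebra.IsInvariant.exists_smul_of_under_eq A B G M N
    ((under_eq_maximalIdeal M).trans (under_eq_maximalIdeal N).symm)
  by_contra hne
  obtain ⟨c, hc, hfix, hsmul⟩ := exists_sub_one_mem_and_smul_mem (G := G) M
  obtain ⟨a, rfl⟩ := mem_range_algebraMap_of_smul_mem (A := A) (G := G) M hc fun g hg =>
    hsmul g fun hmem => hg (hfix hmem)
  have hmem := hsmul g hne
  rw [smul_algebraMap] at hmem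
  exact hM.ne_top ((Ideal.eq_top_iff_one _).mpr (by simpa using M.sub_mem hmem hc))

theorem isInteger_or_isInteger_inv_of_aeval_eq_zero {B L : Type*} [CommRing B] [IsLocalRing B]
    [Field L] [Algebra B L] [IsIntegrallyClosedIn B L] {x : L} {P : B[X]} (hP : aeval x P = 0)
    {n : ℕ} (hn : IsUnit (P.coeff n)) : IsInteger B x ∨ IsInteger B x⁻¹ := by
  induction hd : P.natDegree using Nat.strong_induction_on generalizing P with | h d ih =>
  obtain _ | d := d
  · exfalso
    rw [eq_C_of_natDegree_eq_zero hd] at hP hn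
    obtain rfl : n = 0 := by
      by_contra h
      exact not_isUnit_zero (by rwa [coeff_C_of_ne_zero h] at hn)
    rw [aeval_C] at hP
    rw [coeff_C_zero] at hn
    exact (hn.map (algebraMap B L)).ne_zero hP
  obtain ⟨c, hc⟩ := IsIntegrallyClosedIn.isIntegral_iff.mp (isIntegral_leadingCoeff_smul P x hP)
  rw [Algebra.smul_def] at hc
  by_cases ha : IsUnit P.leadingCoeff
  · obtain ⟨a, ha⟩ := ha.exists_left_inv
    exact .inl ⟨a * c, by rw [map_mul, hc, ← mul_assoc, ← map_mul, ha, map_one, one_mul]⟩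
  by_cases hcu : IsUnit c
  · obtain ⟨b, hb⟩ := hcu.exists_left_inv
    exact .inr ⟨b * P.leadingCoeff, eq_inv_of_mul_eq_one_left <| by
      rw [map_mul, mul_assoc, ← hc, ← map_mul, hb, map_one]⟩
  have hn_ne : n ≠ P.natDegree := fun h => ha (by rwa [h] at hn)
  -- `c = a x` for the leading coefficient `a`, so `a x ^ (d + 1)` may be replaced by `c x ^ d`.
  refine ih _ ?_ (P := P.eraseLead + C c * X ^ d) ?_ ?_ rfl
  · have := P.eraseLead_natDegree_le
    exact Nat.lt_succ_of_le
      (natDegree_add_le_of_degree_le (by omega) (natDegree_C_mul_X_pow_le c d))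
  · calc aeval x (P.eraseLead + C c * X ^ d)
        = aeval x (P.eraseLead + C P.leadingCoeff * X ^ (d + 1)) := by
          simp only [map_add, map_mul, aeval_C, hc, map_pow, aeval_X]
          ring
      _ = 0 := by rw [← hd, eraseLead_add_C_mul_X_pow, hP]
  · rw [coeff_add, eraseLead_coeff_of_ne n hn_ne, coeff_C_mul_X_pow]
    refine (isUnit_or_isUnit_of_isUnit_add (b := -(if n = d then c else 0)) ?_).resolve_right ?_
    · rwa [add_neg_cancel_right]
    · rw [IsUnit.neg_iff]
      split_ifs
      exacts [hcu, not_isUnit_zero]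

section IntegralClosure

variable {A K : Type*} [CommRing A] [IsDomain A] [ValuationRing A] [Field K] [Algebra A K]
  [IsFractionRing A K]

theorem exists_eq_C_mul_map_and_coeff_eq_one (f : K[X]) :
    ∃ (c : K) (P : A[X]), f = C c * P.map (algebraMap A K) ∧ ∃ i, P.coeff i = 1 := by
  by_cases hf : f = 0
  · exact ⟨0, 1, by rw [hf, C_0, zero_mul], 0, coeff_one_zero⟩
  obtain ⟨i, hi, hmax⟩ := Finset.exists_max_image f.support
    (fun i => ValuationRing.valuation A K (f.coeff i)) (nonempty_support_iff.mpr hf)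
  rw [mem_support_iff] at hi
  have hlift : C (f.coeff i)⁻¹ * f ∈ lifts (algebraMap A K) := by
    rw [lifts_iff_coeff_lifts]
    intro n
    refine (ValuationRing.mem_integer_iff A K _).mp ?_
    rw [coeff_C_mul, Valuation.mem_integer_iff, map_mul, map_inv₀,
      inv_mul_le_one₀ ((Valuation.pos_iff _).mpr hi)]
    by_cases hn : f.coeff n = 0
    · simp [hn]
    · exact hmax n (mem_support_iff.mpr hn)
  obtain ⟨P, hP⟩ := (mem_lifts _).mp hlift
  refine ⟨f.coeff i, P, ?_, i, IsFractionRing.injective A K ?_⟩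
  · rw [hP, ← mul_assoc, ← C_mul, mul_inv_cancel₀ hi, C_1, one_mul]
  · rw [← coeff_map, hP, coeff_C_mul, inv_mul_cancel₀ hi, map_one]

variable [HenselianLocalRing A] {L : Type*} [Field L] [Algebra K L] [Algebra A L]
  [IsScalarTower A K L]

variable (K) in
theorem isLocalRing_integralClosure [IsGalois K L] [FiniteDimensional K L] :
    IsLocalRing (integralClosure A L) := by
  let B := integralClosure A L
  have : IsFractionRing B L := integralClosure.isFractionRing_of_finite_extension K L
  let _ := IsIntegralClosure.MulSemiringAction A K L B
  have : Algebra.IsInvariant A B (L ≃ₐ[K] L) := Algebra.isInvariant_of_isGalois A K L B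
  have : SMulCommClass (L ≃ₐ[K] L) A B := ⟨fun g => map_smul (galRestrict A K L B g)⟩
  exact isLocalRing_of_isInvariant A B (L ≃ₐ[K] L)

theorem isIntegral_or_isIntegral_inv_of_isGalois [IsGalois K L] [FiniteDimensional K L] (x : L) :
    IsIntegral A x ∨ IsIntegral A x⁻¹ := by
  let B := integralClosure A L
  have : IsLocalRing B := isLocalRing_integralClosure K
  obtain ⟨c, P, hP, n, hn⟩ := exists_eq_C_mul_map_and_coeff_eq_one (A := A) (minpoly K x)
  have hc : c ≠ 0 := by
    rintro rfl
    exact minpoly.ne_zero (Algebra.IsIntegral.isIntegral (R := K) x) (by rw [hP, C_0, zero_mul])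
  have hroot : aeval x (P.map (algebraMap A B)) = 0 := by
    have h := minpoly.aeval K x
    rw [hP, map_mul, aeval_C, aeval_map_algebraMap, mul_eq_zero] at h
    rw [aeval_map_algebraMap]
    exact h.resolve_left (by simpa using hc)
  have hunit : IsUnit ((P.map (algebraMap A B)).coeff n) := by
    rw [coeff_map, hn, map_one]
    exact isUnit_one
  exact (isInteger_or_isInteger_inv_of_aeval_eq_zero hroot hunit).imp
    (fun ⟨b, hb⟩ => hb ▸ b.2) (fun ⟨b, hb⟩ => hb ▸ b.2)

theorem isIntegral_or_isIntegral_inv_of_isSeparable {x : L} (hx : IsSeparable K x) :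
    IsIntegral A x ∨ IsIntegral A x⁻¹ := by
  let E := (minpoly K x).SplittingField
  have : IsGalois K E := .of_separable_splitting_field hx
  obtain ⟨φ⟩ : Nonempty (IntermediateField.adjoin K {x} →ₐ[K] E) :=
    IntermediateField.nonempty_algHom_adjoin_of_splits (by
      rintro _ rfl
      exact ⟨hx.isIntegral, SplittingField.splits _⟩)
  let y := IntermediateField.AdjoinSimple.gen K x
  have isIntegral_iff (z : IntermediateField.adjoin K {x}) :
      IsIntegral A (φ z) ↔ IsIntegral A (z : L) :=
    (isIntegral_algHom_iff (φ.restrictScalars A) φ.injective).trans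
      (isIntegral_algHom_iff ((IntermediateField.val _).restrictScalars A)
        Subtype.val_injective).symm
  rw [← IntermediateField.AdjoinSimple.coe_gen K x, ← IntermediateField.coe_inv,
    ← isIntegral_iff y, ← isIntegral_iff y⁻¹, map_inv₀]
  exact isIntegral_or_isIntegral_inv_of_isGalois (K := K) (φ y)

theorem isIntegral_or_isIntegral_inv [Algebra.IsAlgebraic K L] (x : L) :
    IsIntegral A x ∨ IsIntegral A x⁻¹ := by
  obtain ⟨n, ⟨y, hy⟩, hxy⟩ := IsPurelyInseparable.pow_mem (separableClosure K L) (ringExpChar K) x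
  have hpos : 0 < ringExpChar K ^ n := pow_pos (expChar_pos K _) n
  have hsep : IsSeparable K (x ^ ringExpChar K ^ n) := hxy ▸ mem_separableClosure_iff.mp hy
  refine (isIntegral_or_isIntegral_inv_of_isSeparable hsep).imp (.of_pow hpos) fun h => ?_
  rw [← inv_pow] at h
  exact h.of_pow hpos

variable (A K L) in
/-- The integral closure of a Henselian valuation ring `A` in an algebraic extension `L` of its
fraction field `K`, as a valuation subring of `L`. -/
def integralClosureValuationSubring [Algebra.IsAlgebraic K L] : ValuationSubring L :=
  .ofSubring (integralClosure A L).toSubring (isIntegral_or_isIntegral_inv (K := K))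

theorem valuation_integralClosureValuationSubring_le_one_iff [Algebra.IsAlgebraic K L] {x : L} :
    (integralClosureValuationSubring A K L).valuation x ≤ 1 ↔ IsIntegral A x :=
  (integralClosureValuationSubring A K L).valuation_le_one_iff x

end IntegralClosure

theorem integers_integralClosure {A L Γ₀ : Type*} [CommRing A] [Field L] [Algebra A L]
    [LinearOrderedCommGroupWithZero Γ₀] {v : Valuation L Γ₀}
    (hv : ∀ z, v z ≤ 1 ↔ IsIntegral A z) : v.Integers (integralClosure A L) :=
  ⟨Subtype.val_injective, fun b => (hv b).mpr b.2, fun {z} hz => ⟨⟨z, (hv z).mp hz⟩, rfl⟩⟩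

section Valuation

variable {A K L Γ₀ : Type*} [CommRing A] [Field K] [Algebra A K] [Field L] [Algebra K L]
  [Algebra A L] [IsScalarTower A K L] [LinearOrderedCommGroupWithZero Γ₀] {v : Valuation L Γ₀}

theorem valuation_algebraMap_le_one_iff [IsIntegrallyClosed A] [IsFractionRing A K]
    (hv : ∀ z, v z ≤ 1 ↔ IsIntegral A z) {a : K} :
    v (algebraMap K L a) ≤ 1 ↔ ∃ a' : A, algebraMap A K a' = a := by
  rw [hv, isIntegral_algebraMap_iff (algebraMap K L).injective, IsIntegrallyClosed.isIntegral_iff]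

theorem valuation_algEquiv [Algebra.IsAlgebraic K L] (hv : ∀ z, v z ≤ 1 ↔ IsIntegral A z)
    (σ : L ≃ₐ[K] L) (x : L) : v (σ x) = v x := by
  suffices hle : ∀ (τ : L ≃ₐ[K] L) (y : L), v y ≤ v (τ y) from
    le_antisymm (by simpa using hle σ.symm (σ x)) (hle σ x)
  intro τ y
  by_contra! hlt
  have hequiv : v.IsEquiv (v.comap (τ : L →+* L)) := Valuation.isEquiv_iff_val_le_one.mpr
    fun {z} => (hv z).trans <| (isIntegral_algHom_iff (τ.restrictScalars A).toAlgHom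
      τ.injective).symm.trans (hv (τ z)).symm
  have apply_succ (n : ℕ) : (τ ^ (n + 1)) y = τ ((τ ^ n) y) := by
    rw [pow_succ', AlgEquiv.mul_apply]
  have hanti : StrictAnti fun n : ℕ => v ((τ ^ n) y) := strictAnti_nat_of_succ_lt fun n => by
    induction n with
    | zero => simpa using hlt
    | succ n ih =>
      simp only [apply_succ] at ih ⊢
      exact hequiv.lt_iff_lt.mp ih
  refine Set.infinite_range_of_injective (hanti.injective.of_comp (f := v))
    (((minpoly K y).rootSet_finite L).subset ?_)
  rintro _ ⟨n, rfl⟩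
  rw [mem_rootSet_of_ne (minpoly.ne_zero (Algebra.IsIntegral.isIntegral y)), aeval_algEquiv,
    AlgHom.comp_apply, minpoly.aeval, map_zero]

theorem aeval_mem_adjoin_smul [IsIntegrallyClosed A] [IsFractionRing A K]
    (hv : ∀ z, v z ≤ 1 ↔ IsIntegral A z) {x : L} {b : K} (hbx : b • x ≠ 0) {f : K[X]}
    (hf : ∀ i, v (algebraMap K L (f.coeff i) * x ^ i) ≤ v (b • x) ^ i) :
    aeval x f ∈ Algebra.adjoin A {b • x} := by
  have hb : b ≠ 0 := left_ne_zero_of_smul hbx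
  have smul_eq (i : ℕ) : f.coeff i • x ^ i = (f.coeff i / b ^ i) • (b • x) ^ i := by
    rw [_root_.smul_pow, smul_smul, div_mul_cancel₀ _ (pow_ne_zero i hb)]
  rw [aeval_eq_sum_range]
  refine sum_mem fun i _ => ?_
  obtain ⟨a, ha⟩ : ∃ a : A, algebraMap A K a = f.coeff i / b ^ i := by
    rw [← valuation_algebraMap_le_one_iff hv,
      ← mul_le_iff_le_one_left (pow_pos ((Valuation.pos_iff v).mpr hbx) i), ← map_pow, ← map_mul,
      ← Algebra.smul_def, ← smul_eq, Algebra.smul_def, map_pow]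
    exact hf i
  rw [smul_eq, ← ha, algebraMap_smul]
  exact Subalgebra.smul_mem _ (pow_mem (Algebra.self_mem_adjoin_singleton A _) i) a

end Valuation

theorem exists_natDegree_lt_aeval_eq {K L : Type*} [Field K] [Field L] [Algebra K L]
    (h : (Module.finrank K L).Prime) {x : L} (hx : x ∉ (algebraMap K L).range) (z : L) :
    ∃ f : K[X], f.natDegree < Module.finrank K L ∧ aeval x f = z := by
  have : FiniteDimensional K L := Module.finite_of_finrank_pos h.pos
  have hxi : IsIntegral K x := Algebra.IsIntegral.isIntegral x
  have hdeg : (minpoly K x).natDegree = Module.finrank K L :=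
    ((Nat.dvd_prime h).mp (minpoly.degree_dvd hxi)).resolve_left fun h1 =>
      hx (minpoly.natDegree_eq_one_iff.mp h1)
  have hz : z ∈ Algebra.adjoin K {x} := by
    rw [← IntermediateField.adjoin_simple_toSubalgebra_of_isAlgebraic hxi.isAlgebraic,
      (Field.primitive_element_iff_minpoly_natDegree_eq K x).mpr hdeg]
    trivial
  rw [Algebra.adjoin_singleton_eq_range_aeval] at hz
  obtain ⟨g, rfl⟩ := hz
  refine ⟨g %ₘ minpoly K x, ?_, aeval_modByMonic_eq_self_of_root (minpoly.aeval K x)⟩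
  rw [← hdeg]
  exact natDegree_modByMonic_lt g (minpoly.monic hxi) (minpoly.ne_one K x)

theorem natDegree_minpoly_residue_dvd_card (A G : Type*) {B : Type*} [CommRing A] [IsLocalRing A]
    [CommRing B] [IsLocalRing B] [Algebra A B] [IsLocalHom (algebraMap A B)] [Group G] [Finite G]
    [MulSemiringAction G B] [SMulCommClass G A B] [Algebra.IsInvariant A B G] (b : B) :
    (minpoly (ResidueField A) (residue B b)).natDegree ∣ Nat.card G := by
  cases nonempty_fintype G
  have : SMulCommClass G (ResidueField A) (ResidueField B) := ⟨fun g a c => by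
    obtain ⟨a, rfl⟩ := residue_surjective a
    obtain ⟨c, rfl⟩ := residue_surjective c
    rw [Algebra.smul_def, Algebra.smul_def, ResidueField.algebraMap_residue, smul_mul',
      ← ResidueField.residue_smul, smul_algebraMap]⟩
  obtain ⟨f, hf, hdeg, hmonic⟩ := lifts_and_natDegree_eq_and_monic
    (Algebra.IsInvariant.charpoly_mem_lifts A B G b) (MulSemiringAction.monic_charpoly G b)
  let p := minpoly (ResidueField A) (residue B b)
  let q := f.map (residue A)
  have hq_monic : q.Monic := hmonic.map _
  have hq_map : q.map (algebraMap (ResidueField A) (ResidueField B)) =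
      ∏ g : G, (X - C (g • residue B b)) := by
    rw [map_map, ← ResidueField.algebraMap_eq, ← ResidueField.algebraMap_eq,
      ← IsScalarTower.algebraMap_eq, IsScalarTower.algebraMap_eq A B, ← map_map, hf,
      MulSemiringAction.charpoly_eq, Polynomial.map_prod]
    simp
  have hq_natDegree : q.natDegree = Nat.card G := by
    rw [hmonic.natDegree_map, hdeg, MulSemiringAction.charpoly_eq,
      natDegree_finsetProd_X_sub_C_eq_card, Finset.card_univ, Nat.card_eq_fintype_card]
  have hint : IsIntegral (ResidueField A) (residue B b) := by
    refine ⟨q, hq_monic, ?_⟩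
    rw [← eval_map, hq_map, eval_prod]
    exact Finset.prod_eq_zero (Finset.mem_univ 1) (by simp)
  have hdvd : q ∣ p ^ Nat.card G := by
    rw [← map_dvd_map' (algebraMap (ResidueField A) (ResidueField B)), hq_map, Polynomial.map_pow,
      Nat.card_eq_fintype_card, ← Finset.card_univ, ← Finset.prod_const]
    refine Finset.prod_dvd_prod_of_dvd _ _ fun g _ => dvd_iff_isRoot.mpr ?_
    rw [IsRoot, eval_map_algebraMap, aeval_smul, minpoly.aeval, smul_zero]
  obtain ⟨i, -, hi⟩ := (dvd_prime_pow (minpoly.irreducible hint).prime _).mp hdvd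
  refine ⟨i, ?_⟩
  rw [← hq_natDegree, eq_of_monic_of_associated hq_monic ((minpoly.monic hint).pow i) hi,
    (minpoly.monic hint).natDegree_pow, mul_comm]

theorem isUnit_aeval_of_natDegree_lt {A B : Type*} [CommRing A] [IsLocalRing A] [CommRing B]
    [IsLocalRing B] [Algebra A B] [IsLocalHom (algebraMap A B)] {b : B} {P : A[X]} {i : ℕ}
    (hi : IsUnit (P.coeff i))
    (hdeg : P.natDegree < (minpoly (ResidueField A) (residue B b)).natDegree) :
    IsUnit (aeval b P) := by
  rw [← residue_ne_zero_iff_isUnit]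
  intro hzero
  have hroot : aeval (residue B b) (P.map (residue A)) = 0 := by
    rw [← ResidueField.algebraMap_eq A, aeval_map_algebraMap, ← ResidueField.algebraMap_eq,
      aeval_algebraMap_apply, ResidueField.algebraMap_eq, hzero]
  have hmap : P.map (residue A) = 0 := eq_zero_of_dvd_of_natDegree_lt (minpoly.dvd _ _ hroot)
    (natDegree_map_le.trans_lt hdeg)
  exact (residue_ne_zero_iff_isUnit _).mpr hi (by rw [← coeff_map, hmap, coeff_zero])

section IsIntegralClosure

variable {A B K L : Type*} [CommRing A] [CommRing B] [Algebra A B] [Field K] [Algebra A K]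
  [IsFractionRing A K] [Field L] [Algebra K L] [Algebra A L] [IsScalarTower A K L]
  [Algebra B L] [IsScalarTower A B L] [IsIntegralClosure B A L]

theorem mem_range_of_algebraMap_mem_range [IsIntegrallyClosed A] {b : B}
    (hb : algebraMap B L b ∈ (algebraMap K L).range) : b ∈ (algebraMap A B).range := by
  obtain ⟨a, ha⟩ := hb
  have hint : IsIntegral A (algebraMap K L a) :=
    ha ▸ (IsIntegralClosure.isIntegral A L b).algebraMap
  rw [isIntegral_algebraMap_iff (algebraMap K L).injective, IsIntegrallyClosed.isIntegral_iff]
    at hint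
  obtain ⟨a, rfl⟩ := hint
  refine ⟨a, IsIntegralClosure.algebraMap_injective B A L ?_⟩
  rw [← ha, ← IsScalarTower.algebraMap_apply, ← IsScalarTower.algebraMap_apply]

variable [IsDomain A]

theorem natDegree_minpoly_residue_eq_finrank [IsIntegrallyClosed A] [IsLocalRing A] [IsLocalRing B]
    [IsLocalHom (algebraMap A B)] [IsGalois K L] (hprime : (Module.finrank K L).Prime) {b : B}
    (hb : residue B b ∉ (algebraMap (ResidueField A) (ResidueField B)).range) :
    (minpoly (ResidueField A) (residue B b)).natDegree = Module.finrank K L := by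
  have : FiniteDimensional K L := Module.finite_of_finrank_pos hprime.pos
  have : IsDomain B := (IsIntegralClosure.algebraMap_injective B A L).isDomain
  have := IsIntegralClosure.isFractionRing_of_finite_extension A K L B
  let _ := IsIntegralClosure.MulSemiringAction A K L B
  have : Algebra.IsInvariant A B (L ≃ₐ[K] L) := Algebra.isInvariant_of_isGalois A K L B
  have : SMulCommClass (L ≃ₐ[K] L) A B := ⟨fun g => map_smul (galRestrict A K L B g)⟩
  refine ((Nat.dvd_prime hprime).mp ?_).resolve_left fun h => hb (minpoly.natDegree_eq_one_iff.mp h)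
  rw [← IsGalois.card_aut_eq_finrank]
  exact natDegree_minpoly_residue_dvd_card A (L ≃ₐ[K] L) b

theorem adjoin_singleton_eq_top_of_residue_notMem_range [ValuationRing A] [IsLocalRing B]
    [IsLocalHom (algebraMap A B)] [IsGalois K L] (hprime : (Module.finrank K L).Prime) {b : B}
    (hb : residue B b ∉ (algebraMap (ResidueField A) (ResidueField B)).range) :
    Algebra.adjoin A {b} = ⊤ := by
  have hinj : Function.Injective (algebraMap B L) := IsIntegralClosure.algebraMap_injective B A L
  have hbK : algebraMap B L b ∉ (algebraMap K L).range := fun h => by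
    obtain ⟨a, rfl⟩ := mem_range_of_algebraMap_mem_range (A := A) h
    exact hb ⟨residue A a, ResidueField.algebraMap_residue a⟩
  refine eq_top_iff.mpr fun z _ => ?_
  by_cases hz : z = 0
  · exact hz ▸ zero_mem _
  obtain ⟨f, hf, hfz⟩ := exists_natDegree_lt_aeval_eq hprime hbK (algebraMap B L z)
  obtain ⟨c, P, rfl, i, hi⟩ := exists_eq_C_mul_map_and_coeff_eq_one (A := A) f
  have hPb : algebraMap K L c * algebraMap B L (aeval b P) = algebraMap B L z := by
    rw [← hfz, map_mul, aeval_C, aeval_map_algebraMap, aeval_algebraMap_apply]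
  have hc : c ≠ 0 := by
    rintro rfl
    exact hz (hinj (by rw [← hPb, map_zero, zero_mul, map_zero]))
  rw [natDegree_C_mul hc, natDegree_map_eq_of_injective (IsFractionRing.injective A K)] at hf
  obtain ⟨u, hu⟩ : IsUnit (aeval b P) := isUnit_aeval_of_natDegree_lt (hi ▸ isUnit_one)
    (by rwa [natDegree_minpoly_residue_eq_finrank hprime hb])
  obtain ⟨a, ha⟩ := mem_range_of_algebraMap_mem_range (A := A) (K := K) (L := L)
    (b := z * ↑u⁻¹) ⟨c, by rw [map_mul, ← hPb, ← hu, mul_assoc, ← map_mul, Units.mul_inv, map_one,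
      mul_one]⟩
  have hz_eq : z = a • aeval b P := by
    rw [Algebra.smul_def, ha, ← hu, Units.inv_mul_cancel_right]
  rw [hz_eq]
  exact Subalgebra.smul_mem _ (aeval_mem_adjoin_singleton A b) a

end IsIntegralClosure

section OrderedGroup

theorem orderOf_mk_eq_index {Γ : Type*} [Group Γ] {H : Subgroup Γ} [H.Normal] (hH : H.index.Prime)
    {g : Γ} (hg : g ∉ H) : orderOf (g : Γ ⧸ H) = H.index :=
  have := Fact.mk hH
  orderOf_eq_prime
    (by rw [← QuotientGroup.mk_pow, QuotientGroup.eq_one_iff]; exact H.pow_index_mem g)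
    (by rwa [ne_eq, QuotientGroup.eq_one_iff])

theorem pow_notMem_of_lt_index {Γ : Type*} [Group Γ] {H : Subgroup Γ} [H.Normal]
    (hH : H.index.Prime) {g : Γ} (hg : g ∉ H) {i : ℕ} (hi : i ≠ 0) (hlt : i < H.index) :
    g ^ i ∉ H := by
  rw [← QuotientGroup.eq_one_iff, QuotientGroup.mk_pow]
  exact pow_ne_one_of_lt_orderOf hi (hlt.trans_eq (orderOf_mk_eq_index hH hg).symm)

variable {Γ : Type*} [CommGroup Γ] {H : Subgroup Γ}

theorem exists_lt_index_pow_div_mem (hH : H.index.Prime) {σ : Γ} (hσ : σ ∉ H) (g : Γ) :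
    ∃ k < H.index, σ ^ k / g ∈ H := by
  classical
  have := Fact.mk hH
  have : Finite (Γ ⧸ H) := Nat.finite_of_card_ne_zero hH.ne_zero
  have hg : (g : Γ ⧸ H) ∈ Submonoid.powers (σ : Γ ⧸ H) :=
    mem_powers_of_prime_card (p := H.index) rfl (by rwa [ne_eq, QuotientGroup.eq_one_iff])
  rw [mem_powers_iff_mem_range_orderOf, orderOf_mk_eq_index hH hσ, Finset.mem_image] at hg
  obtain ⟨k, hk, hkg⟩ := hg
  exact ⟨k, Finset.mem_range.mp hk, QuotientGroup.eq_iff_div_mem.mp hkg⟩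

variable [LinearOrder Γ] [IsOrderedMonoid Γ]

theorem exists_notMem_lt_one (hH : H ≠ ⊤) : ∃ g ∉ H, g < 1 := by
  obtain ⟨g, -, hg⟩ := SetLike.exists_of_lt hH.lt_top
  rcases lt_trichotomy g 1 with h | rfl | h
  · exact ⟨g, hg, h⟩
  · exact absurd H.one_mem hg
  · exact ⟨g⁻¹, H.inv_mem_iff.not.mpr hg, Left.inv_lt_one_iff.mpr h⟩

theorem exists_notMem_lt_one_le_pow_two_pow
    (hsq : ∀ δ ∉ H, δ < 1 → ∃ σ ∉ H, σ < 1 ∧ δ ≤ σ ^ 2) {δ : Γ} (hδ : δ ∉ H) (hδ1 : δ < 1) (n : ℕ) :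
    ∃ σ ∉ H, σ < 1 ∧ δ ≤ σ ^ 2 ^ n := by
  induction n with
  | zero => exact ⟨δ, hδ, hδ1, by simp⟩
  | succ n ih =>
    obtain ⟨σ, hσ, hσ1, hle⟩ := ih
    obtain ⟨τ, hτ, hτ1, hστ⟩ := hsq σ hσ hσ1
    exact ⟨τ, hτ, hτ1, hle.trans (by rw [pow_succ', pow_mul]; exact pow_le_pow_left' hστ _)⟩

theorem div_pow_lt_one_of_forall_sq_lt {g : Γ} (hg : ∀ σ ∉ H, σ < 1 → σ ^ 2 < g) {δ : Γ}
    (hδ : δ < 1) {j : ℕ} (hmem : ∀ k ≤ j, δ / g ^ k ∉ H) : δ / g ^ j < 1 := by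
  induction j with
  | zero => simpa using hδ
  | succ j ih =>
    have hτ : (δ / g ^ j) ^ 2 < g :=
      hg _ (hmem j j.le_succ) (ih fun k hk => hmem k (hk.trans j.le_succ))
    have hτg : δ / g ^ j = δ / g ^ (j + 1) * g := by rw [pow_succ, ← div_div, div_mul_cancel]
    by_contra! hle
    have hne : δ / g ^ (j + 1) ≠ 1 := fun h => hmem (j + 1) le_rfl (h ▸ H.one_mem)
    have hinv : (δ / g ^ (j + 1))⁻¹ ^ 2 < g :=
      hg _ (H.inv_mem_iff.not.mpr (hmem _ le_rfl)) (Left.inv_lt_one_iff.mpr (hle.lt_of_ne' hne))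
    rw [hτg] at hτ
    have := mul_lt_mul_of_lt_of_lt hτ hinv
    rw [← mul_pow, mul_comm, inv_mul_cancel_left, sq] at this
    exact this.false

theorem exists_forall_exists_le_pow (hH : H.index.Prime) :
    ∃ g ∉ H, g < 1 ∧
      ∀ δ < 1, ∀ i < H.index, i ≠ 0 → δ / g ^ i ∈ H → ∃ σ < 1, σ / g ∈ H ∧ δ ≤ σ ^ i := by
  have notMem {g δ : Γ} (hg : g ∉ H) {i j : ℕ} (hi : i < H.index) (hj : j < i)
      (h : δ / g ^ i ∈ H) : δ / g ^ j ∉ H := fun h' => by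
    refine pow_notMem_of_lt_index hH hg (Nat.sub_ne_zero_of_lt hj) ((Nat.sub_le i j).trans_lt hi) ?_
    have := H.div_mem h' h
    rwa [div_div_div_cancel_left, div_eq_mul_inv, ← pow_sub g hj.le] at this
  -- If every `δ ∉ H` below `1` is bounded by the square of another such element, they come
  -- arbitrarily close to `1`, and some power of each lies in `g H`, whatever `g ∉ H` is. Otherwise
  -- a `δ` that is bounded by no such square serves as `g`.
  by_cases hsq : ∀ δ ∉ H, δ < 1 → ∃ σ ∉ H, σ < 1 ∧ δ ≤ σ ^ 2
  · obtain ⟨g, hg, hg1⟩ := exists_notMem_lt_one fun h => hH.ne_one (Subgroup.index_eq_one.mpr h)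
    refine ⟨g, hg, hg1, fun δ hδ i hi hi0 hmem => ?_⟩
    have hδH : δ ∉ H := by simpa using notMem hg hi (Nat.pos_of_ne_zero hi0) hmem
    obtain ⟨τ, hτ, hτ1, hle⟩ := exists_notMem_lt_one_le_pow_two_pow hsq hδH hδ (H.index * H.index)
    obtain ⟨k, hk, hkg⟩ := exists_lt_index_pow_div_mem hH hτ g
    have hk0 : k ≠ 0 := by
      rintro rfl
      exact hg (by simpa using hkg)
    refine ⟨τ ^ k, pow_lt_one' hτ1 hk0, hkg, hle.trans ?_⟩
    rw [← pow_mul]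
    exact pow_le_pow_right_of_le_one' hτ1.le
      ((Nat.mul_le_mul hk.le hi.le).trans Nat.lt_two_pow_self.le)
  · push Not at hsq
    obtain ⟨g, hg, hg1, hlt⟩ := hsq
    refine ⟨g, hg, hg1, fun δ hδ i hi hi0 hmem => ?_⟩
    obtain ⟨i, rfl⟩ := Nat.exists_eq_succ_of_ne_zero hi0
    have hδi : δ / g ^ i < 1 := div_pow_lt_one_of_forall_sq_lt hlt hδ fun k hk =>
      notMem hg hi (Nat.lt_succ_of_le hk) hmem
    rcases le_total g (δ / g ^ i) with hle | hle
    · refine ⟨δ / g ^ i, hδi, by rwa [div_div, ← pow_succ], ?_⟩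
      calc δ = g ^ i * (δ / g ^ i) := by simp
        _ ≤ (δ / g ^ i) ^ i * (δ / g ^ i) := by gcongr
        _ = (δ / g ^ i) ^ (i + 1) := (pow_succ _ _).symm
    · refine ⟨g, hg1, by simp, ?_⟩
      calc δ = g ^ i * (δ / g ^ i) := by simp
        _ ≤ g ^ i * g := by gcongr
        _ = g ^ (i + 1) := (pow_succ _ _).symm

end OrderedGroup

section ValueGroup

theorem mem_valueGroup_iff_mem_range {F Γ₀ : Type*} [GroupWithZero F] [GroupWithZero Γ₀]
    (f : F →*₀ Γ₀) {u : Γ₀ˣ} : u ∈ valueGroup f ↔ (u : Γ₀) ∈ Set.range f := by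
  rw [← Subgroup.mem_toSubmonoid, ← MonoidWithZeroHom.valueMonoid_eq_valueGroup]
  rfl

theorem valuation_aeval_eq_and_forall_le {K L Γ₀ : Type*} [Field K] [Field L] [Algebra K L]
    [LinearOrderedCommGroupWithZero Γ₀] {v : Valuation L Γ₀} {x : L} {n : ℕ}
    (hx : ∀ i < n, i ≠ 0 → v x ^ i ∉ Set.range (v.comap (algebraMap K L))) {f : K[X]}
    (hf : f.natDegree < n) :
    ∃ j < n, v (aeval x f) = v (algebraMap K L (f.coeff j) * x ^ j) ∧
      ∀ i, v (algebraMap K L (f.coeff i) * x ^ i) ≤ v (aeval x f) := by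
  let t (i : ℕ) : L := algebraMap K L (f.coeff i) * x ^ i
  have valuation_t_ne {i j : ℕ} (hij : i < j) (hj : j < n) (htj : t j ≠ 0) : v (t i) ≠ v (t j) := by
    intro h
    have hcj : algebraMap K L (f.coeff j) ≠ 0 := left_ne_zero_of_mul htj
    have hxi : x ^ i ≠ 0 :=
      pow_ne_zero i (ne_zero_pow (Nat.ne_zero_of_lt hij) (right_ne_zero_of_mul htj))
    refine hx (j - i) ((j.sub_le i).trans_lt hj) (Nat.sub_ne_zero_of_lt hij)
      ⟨f.coeff i / f.coeff j, ?_⟩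
    rw [Valuation.comap_apply, map_div₀, map_div₀, div_eq_iff ((Valuation.ne_zero_iff v).mpr hcj)]
    refine mul_right_cancel₀ ((Valuation.ne_zero_iff v).mpr hxi) ?_
    rw [← map_mul, h, map_mul, map_pow, map_pow, mul_right_comm, ← pow_add,
      Nat.sub_add_cancel hij.le, mul_comm]
  obtain ⟨j, hj, hmax⟩ := Finset.exists_max_image (Finset.range n) (fun i => v (t i))
    ⟨_, Finset.mem_range.mpr hf⟩
  have hle (i : ℕ) : v (t i) ≤ v (t j) := by
    by_cases hi : i < n
    · exact hmax i (Finset.mem_range.mpr hi)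
    · simp [t, coeff_eq_zero_of_natDegree_lt (hf.trans_le (not_lt.mp hi))]
  have hsum : v (aeval x f) = v (t j) := by
    simp only [aeval_eq_sum_range' hf, Algebra.smul_def]
    by_cases h0 : t j = 0
    · rw [h0, map_zero] at hle ⊢
      exact le_zero_iff.mp (v.map_sum_le fun i _ => hle i)
    · refine v.map_sum_eq_of_lt hj fun i hi => (hle i).lt_of_ne ?_
      obtain ⟨hi, hij⟩ := Finset.mem_sdiff.mp hi
      rw [Finset.mem_range] at hi hj
      rcases lt_or_gt_of_ne (Finset.notMem_singleton.mp hij) with h | h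
      · exact valuation_t_ne h hj h0
      · intro he
        exact valuation_t_ne h hi (v.ne_zero_iff.mp (he ▸ v.ne_zero_iff.mpr h0)) he.symm
  exact ⟨j, Finset.mem_range.mp hj, hsum, fun i => hsum ▸ hle i⟩

theorem exists_lt_one_term_le_pow {K L Γ₀ : Type*} [Field K] [Field L] [Algebra K L]
    [LinearOrderedCommGroupWithZero Γ₀] {v : Valuation L Γ₀} {n : ℕ} {g : Γ₀ˣ} (hg1 : g < 1)
    (hle : ∀ δ < 1, ∀ i < n, i ≠ 0 →
      δ / g ^ i ∈ valueGroup (v.comap (algebraMap K L)).toMonoidWithZeroHom →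
      ∃ σ < 1, σ / g ∈ valueGroup (v.comap (algebraMap K L)).toMonoidWithZeroHom ∧ δ ≤ σ ^ i)
    {x : L} (hx : v x = g) {c : K} {i : ℕ} (hi : i < n)
    (hxi : i ≠ 0 → v x ^ i ∉ Set.range (v.comap (algebraMap K L)))
    (hc : v (algebraMap K L c * x ^ i) ≤ 1) :
    ∃ σ < 1, σ / g ∈ valueGroup (v.comap (algebraMap K L)).toMonoidWithZeroHom ∧
      v (algebraMap K L c * x ^ i) ≤ (σ : Γ₀) ^ i := by
  by_cases hi0 : i = 0
  · exact ⟨g, hg1, by rw [div_self']; exact one_mem _, by simpa [hi0] using hc⟩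
  by_cases hc0 : v (algebraMap K L c * x ^ i) = 0
  · exact ⟨g, hg1, by rw [div_self']; exact one_mem _, hc0 ▸ zero_le⟩
  let δ := Units.mk0 _ hc0
  have hδ : δ / g ^ i ∈ valueGroup (v.comap (algebraMap K L)).toMonoidWithZeroHom := by
    refine (mem_valueGroup_iff_mem_range _).mpr ⟨c, ?_⟩
    rw [Units.val_div_eq_div_val, Units.val_mk0, Units.val_pow_eq_pow_val, ← hx, map_mul, map_pow,
      mul_div_cancel_right₀ _ (pow_ne_zero i (hx ▸ g.ne_zero))]
    rfl
  have hδ1 : δ < 1 := (show δ ≤ 1 from hc).lt_of_ne fun h => by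
    rw [h, one_div, inv_mem_iff, mem_valueGroup_iff_mem_range, Units.val_pow_eq_pow_val, ← hx] at hδ
    exact hxi hi0 hδ
  exact hle δ hδ1 i hi hi0 hδ

theorem exists_lt_one_forall_term_le_pow {K L Γ₀ ι : Type*} [Field K] [Field L] [Algebra K L]
    [LinearOrderedCommGroupWithZero Γ₀] {v : Valuation L Γ₀} [Finite ι] {n : ℕ} {g : Γ₀ˣ}
    (hg1 : g < 1)
    (hle : ∀ δ < 1, ∀ i < n, i ≠ 0 →
      δ / g ^ i ∈ valueGroup (v.comap (algebraMap K L)).toMonoidWithZeroHom →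
      ∃ σ < 1, σ / g ∈ valueGroup (v.comap (algebraMap K L)).toMonoidWithZeroHom ∧ δ ≤ σ ^ i)
    {x : L} (hx : v x = g)
    (hxi : ∀ i < n, i ≠ 0 → v x ^ i ∉ Set.range (v.comap (algebraMap K L)))
    {c : ι → K} {e : ι → ℕ} (he : ∀ j, e j < n)
    (hc : ∀ j, v (algebraMap K L (c j) * x ^ e j) ≤ 1) :
    ∃ τ < 1, τ / g ∈ valueGroup (v.comap (algebraMap K L)).toMonoidWithZeroHom ∧
      ∀ j, v (algebraMap K L (c j) * x ^ e j) ≤ (τ : Γ₀) ^ e j := by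
  let T := {σ : Γ₀ˣ // σ < 1 ∧ σ / g ∈ valueGroup (v.comap (algebraMap K L)).toMonoidWithZeroHom}
  have : Nonempty T := ⟨g, hg1, by rw [div_self']; exact one_mem _⟩
  choose σ hσ1 hσg hσ using fun j =>
    exists_lt_one_term_le_pow hg1 hle hx (he j) (hxi (e j) (he j)) (hc j)
  obtain ⟨⟨τ, hτ1, hτg⟩, hτ⟩ := Finite.exists_le fun j => (⟨σ j, hσ1 j, hσg j⟩ : T)
  exact ⟨τ, hτ1, hτg, fun j =>
    (hσ j).trans (pow_le_pow_left₀ zero_le (Units.val_le_val.mpr (hτ j)) (e j))⟩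

variable {A K L Γ₀ : Type*} [CommRing A] [Field K] [Algebra A K] [Field L] [Algebra K L]
  [Algebra A L] [IsScalarTower A K L] [LinearOrderedCommGroupWithZero Γ₀] {v : Valuation L Γ₀}
  [IsGalois K L]

theorem pow_finrank_mem_range [FiniteDimensional K L] (hv : ∀ z, v z ≤ 1 ↔ IsIntegral A z) (x : L) :
    v x ^ Module.finrank K L ∈ Set.range (v.comap (algebraMap K L)) := by
  refine ⟨Algebra.norm K x, ?_⟩
  rw [Valuation.comap_apply, Algebra.norm_eq_prod_automorphisms, map_prod]
  simp only [valuation_algEquiv hv, Finset.prod_const, Finset.card_univ]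
  rw [← Nat.card_eq_fintype_card, IsGalois.card_aut_eq_finrank]

theorem orderOf_mk_valueGroup_comap (hv : ∀ z, v z ≤ 1 ↔ IsIntegral A z)
    (hprime : (Module.finrank K L).Prime) {g : Γ₀ˣ}
    (hg : g ∉ valueGroup (v.comap (algebraMap K L)).toMonoidWithZeroHom) {y : L} (hy : v y = g) :
    orderOf (g : Γ₀ˣ ⧸ valueGroup (v.comap (algebraMap K L)).toMonoidWithZeroHom) =
      Module.finrank K L := by
  have := Fact.mk hprime
  have : FiniteDimensional K L := Module.finite_of_finrank_pos hprime.pos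
  refine orderOf_eq_prime ?_ ((QuotientGroup.eq_one_iff _).not.mpr hg)
  rw [← QuotientGroup.mk_pow, QuotientGroup.eq_one_iff, mem_valueGroup_iff_mem_range,
    Units.val_pow_eq_pow_val, ← hy]
  exact pow_finrank_mem_range hv y

theorem pow_valuation_notMem_range (hv : ∀ z, v z ≤ 1 ↔ IsIntegral A z)
    (hprime : (Module.finrank K L).Prime) {y : L}
    (hy : v y ∉ Set.range (v.comap (algebraMap K L))) {i : ℕ} (hi : i < Module.finrank K L)
    (hi0 : i ≠ 0) : v y ^ i ∉ Set.range (v.comap (algebraMap K L)) := by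
  have hy0 : v y ≠ 0 := fun h => hy ⟨0, by rw [map_zero, h]⟩
  let g : Γ₀ˣ := Units.mk0 (v y) hy0
  have hg : g ∉ valueGroup (v.comap (algebraMap K L)).toMonoidWithZeroHom :=
    (mem_valueGroup_iff_mem_range _).not.mpr hy
  have hpow := pow_ne_one_of_lt_orderOf hi0
    (hi.trans_eq (orderOf_mk_valueGroup_comap hv hprime hg rfl).symm)
  rwa [← QuotientGroup.mk_pow, ne_eq, QuotientGroup.eq_one_iff,
    mem_valueGroup_iff_mem_range] at hpow

theorem index_valueGroup_comap (hv : ∀ z, v z ≤ 1 ↔ IsIntegral A z)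
    (hsurj : Function.Surjective v) (hprime : (Module.finrank K L).Prime) {y : L}
    (hy : v y ∉ Set.range (v.comap (algebraMap K L))) :
    (valueGroup (v.comap (algebraMap K L)).toMonoidWithZeroHom).index = Module.finrank K L := by
  have hy0 : v y ≠ 0 := fun h => hy ⟨0, by rw [map_zero, h]⟩
  have hyK : y ∉ (algebraMap K L).range := fun ⟨a, ha⟩ => hy ⟨a, congrArg v ha⟩
  let g : Γ₀ˣ := Units.mk0 (v y) hy0
  have hg : g ∉ valueGroup (v.comap (algebraMap K L)).toMonoidWithZeroHom :=
    (mem_valueGroup_iff_mem_range _).not.mpr hy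
  rw [← orderOf_mk_valueGroup_comap hv hprime hg rfl, Subgroup.index_eq_card]
  refine (orderOf_eq_card_of_forall_mem_zpowers fun q => ?_).symm
  obtain ⟨u, rfl⟩ := QuotientGroup.mk_surjective q
  obtain ⟨z, hz⟩ := hsurj u
  obtain ⟨f, hf, rfl⟩ := exists_natDegree_lt_aeval_eq hprime hyK z
  obtain ⟨j, -, hj, -⟩ := valuation_aeval_eq_and_forall_le
    (fun _ => pow_valuation_notMem_range hv hprime hy) hf
  refine Subgroup.mem_zpowers_iff.mpr ⟨j, ?_⟩
  rw [zpow_natCast, ← QuotientGroup.mk_pow]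
  refine QuotientGroup.eq.mpr ((mem_valueGroup_iff_mem_range _).mpr ⟨f.coeff j, ?_⟩)
  rw [Units.val_mul, ← hz, hj, map_mul, map_pow, Units.val_inv_eq_inv_val,
    Units.val_pow_eq_pow_val, Units.val_mk0, mul_comm,
    mul_inv_cancel_right₀ (pow_ne_zero j hy0)]
  rfl

theorem exists_forall_mem_adjoin_of_valuation_notMem_range [IsIntegrallyClosed A]
    [IsFractionRing A K] (hv : ∀ z, v z ≤ 1 ↔ IsIntegral A z)
    (hsurj : Function.Surjective v) (hprime : (Module.finrank K L).Prime) {y : L}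
    (hy : v y ∉ Set.range (v.comap (algebraMap K L))) {S : Finset L} (hS : ∀ z ∈ S, v z ≤ 1) :
    ∃ s : L, v s ≤ 1 ∧ ∀ z ∈ S, z ∈ Algebra.adjoin A {s} := by
  let H := valueGroup (v.comap (algebraMap K L)).toMonoidWithZeroHom
  have mem_H {u : Γ₀ˣ} : u ∈ H ↔ (u : Γ₀) ∈ Set.range (v.comap (algebraMap K L)) :=
    mem_valueGroup_iff_mem_range _
  have hindex : H.index = Module.finrank K L := index_valueGroup_comap hv hsurj hprime hy
  obtain ⟨g, hg, hg1, hle⟩ := exists_forall_exists_le_pow (H := H) (hindex ▸ hprime)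
  obtain ⟨x, hx⟩ := hsurj g
  have hxH : v x ∉ Set.range (v.comap (algebraMap K L)) := hx ▸ mem_H.not.mp hg
  have hxK : x ∉ (algebraMap K L).range := fun ⟨a, ha⟩ => hxH ⟨a, congrArg v ha⟩
  choose f hf hfz using exists_natDegree_lt_aeval_eq hprime hxK
  have term_le_one (z : L) (hz : z ∈ S) (i : ℕ) :
      v (algebraMap K L ((f z).coeff i) * x ^ i) ≤ 1 := by
    obtain ⟨-, -, -, hterm⟩ := valuation_aeval_eq_and_forall_le
      (fun _ => pow_valuation_notMem_range hv hprime hxH) (hf z)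
    exact (hterm i).trans (by rw [hfz]; exact hS z hz)
  obtain ⟨τ, hτ1, hτg, hτ⟩ := exists_lt_one_forall_term_le_pow hg1 (hindex ▸ hle) hx
    (fun _ => pow_valuation_notMem_range hv hprime hxH)
    (c := fun p : S × Fin (Module.finrank K L) => (f p.1).coeff p.2) (e := fun p => p.2)
    (fun p => p.2.2) fun p => term_le_one p.1 p.1.2 p.2
  obtain ⟨b, hb⟩ := mem_H.mp hτg
  have hbx : v (b • x) = τ := by
    rw [Algebra.smul_def, map_mul, ← Valuation.comap_apply, hb, hx, ← Units.val_mul,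
      div_mul_cancel]
  refine ⟨b • x, hbx ▸ Units.val_le_val.mpr hτ1.le, fun z hz => ?_⟩
  rw [← hfz z]
  refine aeval_mem_adjoin_smul hv (v.ne_zero_iff.mp (hbx ▸ τ.ne_zero)) fun i => ?_
  rw [hbx]
  by_cases hi : i < Module.finrank K L
  · exact hτ (⟨z, hz⟩, ⟨i, hi⟩)
  · rw [coeff_eq_zero_of_natDegree_lt ((hf z).trans_le (not_lt.mp hi)), map_zero, zero_mul,
      map_zero]
    exact zero_le

end ValueGroup

theorem aeval_sub_algebraMap_taylor {R B : Type*} [CommRing R] [CommRing B] [Algebra R B] (x : B)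
    (r : R) (f : R[X]) : aeval (x - algebraMap R B r) (taylor r f) = aeval x f := by
  rw [taylor_apply, aeval_comp, map_add, aeval_X, aeval_C, sub_add_cancel]

section DominatingConstantTerm

variable {L Γ₀ : Type*} [Field L] [LinearOrderedCommGroupWithZero Γ₀]

/-- The constant term of `f` has strictly larger valuation than any other term of `f` evaluated at
`y`. Unlike `v (f.eval y) = v (f.coeff 0)`, this is multiplicative in `f` and bounds every term. -/
def ConstTermDominates (v : Valuation L Γ₀) (y : L) (f : L[X]) : Prop :=
  ∀ i ≠ 0, v (f.coeff i * y ^ i) < v (f.coeff 0)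

namespace ConstTermDominates

variable {v : Valuation L Γ₀} {y : L} {f g : L[X]}

theorem pos (hf : ConstTermDominates v y f) : 0 < v (f.coeff 0) :=
  zero_le.trans_lt (hf 1 one_ne_zero)

theorem le (hf : ConstTermDominates v y f) (i : ℕ) : v (f.coeff i * y ^ i) ≤ v (f.coeff 0) := by
  obtain rfl | hi := eq_or_ne i 0
  · rw [pow_zero, mul_one]
  · exact (hf i hi).le

theorem mul (hf : ConstTermDominates v y f) (hg : ConstTermDominates v y g) :
    ConstTermDominates v y (f * g) := fun i hi => by
  rw [coeff_mul, Finset.sum_mul, mul_coeff_zero, map_mul]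
  refine v.map_sum_lt (mul_pos hf.pos hg.pos).ne' fun ⟨j, k⟩ hjk => ?_
  obtain rfl : j + k = i := Finset.HasAntidiagonal.mem_antidiagonal.mp hjk
  rw [pow_add, mul_mul_mul_comm, map_mul]
  obtain rfl | hj := eq_or_ne j 0
  · rw [pow_zero, mul_one]
    exact mul_lt_mul_of_pos_left (hg k (by simpa using hi)) hf.pos
  · exact (mul_le_mul_right (hg.le k) _).trans_lt (mul_lt_mul_of_pos_right (hf j hj) hg.pos)

theorem const {c : L} (hc : c ≠ 0) : ConstTermDominates v y (C c) := fun i hi => by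
  rw [coeff_C_of_ne_zero hi, zero_mul, map_zero, coeff_C_zero]
  exact v.pos_iff.mpr hc

theorem X_add_C {c : L} (hc : v y < v c) : ConstTermDominates v y (X + C c) := fun i hi => by
  rw [coeff_add, coeff_add, coeff_C_of_ne_zero hi, coeff_X_zero, coeff_C_zero, zero_add, add_zero]
  obtain rfl | hi1 := eq_or_ne i 1
  · simpa using hc
  · rw [coeff_X_of_ne_one hi1, zero_mul, map_zero]
    exact zero_le.trans_lt hc

theorem multiset_prod {s : Multiset L[X]} (hs : ∀ f ∈ s, ConstTermDominates v y f) :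
    ConstTermDominates v y s.prod :=
  s.prod_induction _ (fun _ _ => mul) (C_1 (R := L) ▸ const one_ne_zero) hs

theorem valuation_eval_eq (hf : ConstTermDominates v y f) : v (f.eval y) = v (f.coeff 0) := by
  rw [eval_eq_sum_range]
  refine (v.map_sum_eq_of_lt (Finset.mem_range.mpr f.natDegree.succ_pos) fun i hi => ?_).trans ?_
  · rw [pow_zero, mul_one]
    exact hf i (Finset.notMem_singleton.mp (Finset.mem_sdiff.mp hi).2)
  · rw [pow_zero, mul_one]

end ConstTermDominates

theorem constTermDominates_taylor {v : Valuation L Γ₀} {x a : L} {f : L[X]} (hf : f.Splits)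
    (hf0 : f ≠ 0) (h : ∀ r ∈ f.roots, v (x - a) < v (x - r)) :
    ConstTermDominates v (x - a) (taylor a f) := by
  have htaylor : taylor a f =
      C f.leadingCoeff * (f.roots.map fun r => X + C (a - r)).prod := by
    conv_lhs => rw [hf.eq_prod_roots]
    simp only [taylor_apply, mul_comp, C_comp, multiset_prod_comp, Multiset.map_map,
      Function.comp_apply, sub_comp, X_comp, C_sub, add_sub_assoc]
  rw [htaylor]
  refine .mul (.const (leadingCoeff_ne_zero.mpr hf0)) (.multiset_prod fun g hg => ?_)
  obtain ⟨r, hr, rfl⟩ := Multiset.mem_map.mp hg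
  refine .X_add_C ((h r hr).trans_eq ?_)
  rw [← sub_sub_sub_cancel_left r a x]
  exact (v.map_sub_eq_of_lt_left (h r hr)).symm

end DominatingConstantTerm

section Immediate

variable {A K L Γ₀ : Type*} [CommRing A] [Field K] [Algebra A K] [Field L] [Algebra K L]
  [Algebra A L] [IsScalarTower A K L] [LinearOrderedCommGroupWithZero Γ₀] {v : Valuation L Γ₀}

theorem exists_valuation_sub_le_valuation_sub [Normal K L]
    (hv : ∀ z, v z ≤ 1 ↔ IsIntegral A z) {r : L}
    (hr : v ((minpoly K r).natDegree : L) = 1) :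
    ∃ t : K, ∀ a : K, v (algebraMap K L t - algebraMap K L a) ≤ v (r - algebraMap K L a) := by
  have hri : IsIntegral K r := Algebra.IsIntegral.isIntegral r
  let d := (minpoly K r).natDegree
  let s := (minpoly K r).aroots L
  have hsplits : ((minpoly K r).map (algebraMap K L)).Splits := Normal.splits inferInstance r
  have hcard : Multiset.card s = d := by
    rw [← hsplits.natDegree_eq_card_roots, natDegree_map]
  have hd : (d : L) ≠ 0 := v.ne_zero_iff.mp (hr ▸ one_ne_zero)
  refine ⟨-(minpoly K r).nextCoeff / d, fun a => ?_⟩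
  have hsum : d * (algebraMap K L (-(minpoly K r).nextCoeff / d) - algebraMap K L a) =
      (s.map fun r' => r' - algebraMap K L a).sum := by
    rw [Multiset.sum_map_sub, Multiset.map_id', Multiset.map_const', Multiset.sum_replicate, hcard,
      nsmul_eq_mul, mul_sub, map_div₀, map_natCast, mul_div_cancel₀ _ hd, map_neg,
      ← nextCoeff_map (algebraMap K L).injective,
      hsplits.nextCoeff_eq_neg_sum_roots_of_monic ((minpoly.monic hri).map _), neg_neg]
  rw [← one_mul (v _), ← hr, ← map_mul, hsum]
  refine Multiset.sum_induction (fun y => v y ≤ v (r - algebraMap K L a)) _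
    (fun _ _ => v.map_add_le) (by simp) fun y hy => ?_
  obtain ⟨r', hr', rfl⟩ := Multiset.mem_map.mp hy
  have hconj : IsConjRoot K r r' := (isConjRoot_iff_mem_minpoly_aroots hri).mpr hr'
  obtain ⟨σ, hσ⟩ := (hconj.sub_algebraMap a).exists_algEquiv
  rw [← hσ, valuation_algEquiv hv]

theorem exists_valuation_sub_lt_valuation_sub [Normal K L]
    (hv : ∀ z, v z ≤ 1 ↔ IsIntegral A z) {x r : L}
    (hx : ∀ a : K, ∃ b : K, v (x - algebraMap K L b) < v (x - algebraMap K L a))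
    (hr : v ((minpoly K r).natDegree : L) = 1) :
    ∃ a : K, v (x - algebraMap K L a) < v (x - r) := by
  by_contra! hle
  obtain ⟨t, ht⟩ := exists_valuation_sub_le_valuation_sub hv hr
  obtain ⟨a, ha⟩ := hx t
  refine ha.not_ge ?_
  rw [← sub_add_sub_cancel x (algebraMap K L a) (algebraMap K L t)]
  refine v.map_add_le le_rfl ((Valuation.map_sub_swap v _ _).trans_le ((ht a).trans ?_))
  rw [← sub_sub_sub_cancel_left (algebraMap K L a) r x]
  exact v.map_sub_le le_rfl (hle a)

theorem valuation_natCast_eq_one (hv : ∀ z, v z ≤ 1 ↔ IsIntegral A z) {m n : ℕ}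
    (hmn : m.Coprime n) (hn : v (n : L) ≠ 1) : v (m : L) = 1 := by
  have natCast_le (k : ℕ) : v (k : L) ≤ 1 := (hv _).mpr (isIntegral_natCast k)
  have intCast_le (k : ℤ) : v (k : L) ≤ 1 := (hv _).mpr (isIntegral_intCast k)
  refine (natCast_le m).eq_of_not_lt fun hm => (lt_irrefl (1 : Γ₀)) ?_
  obtain ⟨a, b, hab⟩ := Nat.isCoprime_iff_coprime.mpr hmn
  calc (1 : Γ₀) = v (a * m + b * n) := by
        rw [← Int.cast_natCast m, ← Int.cast_natCast n, ← Int.cast_mul, ← Int.cast_mul,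
          ← Int.cast_add, hab, Int.cast_one, map_one]
    _ < 1 := v.map_add_lt
        (by rw [map_mul]; exact mul_lt_one_of_nonneg_of_lt_one_right (intCast_le a) zero_le hm)
        (by rw [map_mul]; exact mul_lt_one_of_nonneg_of_lt_one_right (intCast_le b) zero_le
              ((natCast_le n).lt_of_ne hn))

theorem valuation_natCast_eq_one_of_lt_finrank [Normal K L]
    (hv : ∀ z, v z ≤ 1 ↔ IsIntegral A z) (hprime : (Module.finrank K L).Prime) {x : L}
    (hx : ∀ a : K, ∃ b : K, v (x - algebraMap K L b) < v (x - algebraMap K L a)) {m : ℕ}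
    (hm : m ≠ 0) (hlt : m < Module.finrank K L) : v (m : L) = 1 := by
  have : FiniteDimensional K L := Module.finite_of_finrank_pos hprime.pos
  have hdeg : (minpoly K x).natDegree = Module.finrank K L := by
    refine ((Nat.dvd_prime hprime).mp
      (minpoly.degree_dvd (Algebra.IsIntegral.isIntegral x))).resolve_left fun h1 => ?_
    obtain ⟨a, rfl⟩ := minpoly.natDegree_eq_one_iff.mp h1
    obtain ⟨b, hb⟩ := hx a
    rw [sub_self, map_zero] at hb
    exact not_lt_zero hb
  refine valuation_natCast_eq_one hv (n := Module.finrank K L)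
    (Nat.coprime_of_lt_prime hm hlt hprime).symm fun h => ?_
  obtain ⟨a, ha⟩ := exists_valuation_sub_lt_valuation_sub hv hx (hdeg ▸ h)
  rw [sub_self, map_zero] at ha
  exact not_lt_zero ha

theorem exists_forall_constTermDominates_taylor [Normal K L]
    (hv : ∀ z, v z ≤ 1 ↔ IsIntegral A z) {x : L}
    (hx : ∀ a : K, ∃ b : K, v (x - algebraMap K L b) < v (x - algebraMap K L a)) {f : K[X]}
    (hf0 : f ≠ 0) (hsplits : (f.map (algebraMap K L)).Splits)
    (hdeg : ∀ m ≠ 0, m ≤ f.natDegree → v (m : L) = 1) :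
    ∃ b : K, ∀ a : K, v (x - algebraMap K L a) ≤ v (x - algebraMap K L b) →
      ConstTermDominates v (x - algebraMap K L a) ((taylor a f).map (algebraMap K L)) := by
  have hf0' : f.map (algebraMap K L) ≠ 0 := Polynomial.map_ne_zero hf0
  suffices h : ∃ b : K, ∀ r ∈ f.aroots L, v (x - algebraMap K L b) < v (x - r) by
    obtain ⟨b, hb⟩ := h
    refine ⟨b, fun a hab => ?_⟩
    rw [map_taylor]
    exact constTermDominates_taylor hsplits hf0' fun r hr => hab.trans_lt (hb r hr)
  have exists_lt {r : L} (hr : r ∈ f.aroots L) :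
      ∃ a : K, v (x - algebraMap K L a) < v (x - r) :=
    exists_valuation_sub_lt_valuation_sub hv hx <| hdeg _
      (minpoly.natDegree_pos (Algebra.IsIntegral.isIntegral r)).ne'
      (natDegree_le_of_dvd (minpoly.dvd K r (mem_aroots.mp hr).2) hf0)
  classical
  obtain hroots | hroots := (f.aroots L).toFinset.eq_empty_or_nonempty
  · refine ⟨0, fun r hr => ?_⟩
    rw [Multiset.toFinset_eq_empty.mp hroots] at hr
    exact (Multiset.notMem_zero r hr).elim
  · obtain ⟨r, hr, hmin⟩ := Finset.exists_min_image _ (fun r => v (x - r)) hroots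
    obtain ⟨b, hb⟩ := exists_lt (Multiset.mem_toFinset.mp hr)
    exact ⟨b, fun r' hr' => hb.trans_le (hmin r' (Multiset.mem_toFinset.mpr hr'))⟩

theorem exists_forall_valuation_taylor_coeff_le [IsDomain A] [ValuationRing A]
    [HenselianLocalRing A] [IsFractionRing A K] [Normal K L] (hv : ∀ z, v z ≤ 1 ↔ IsIntegral A z)
    (hprime : (Module.finrank K L).Prime) {x : L}
    (hx : ∀ a : K, ∃ b : K, v (x - algebraMap K L b) < v (x - algebraMap K L a)) {f : K[X]}
    (hf : f.natDegree < Module.finrank K L) :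
    ∃ b : K, ∀ a : K, v (x - algebraMap K L a) ≤ v (x - algebraMap K L b) → ∀ i,
      v (algebraMap K L ((taylor a f).coeff i) * (x - algebraMap K L a) ^ i) ≤ v (aeval x f) := by
  obtain rfl | hf0 := eq_or_ne f 0
  · simp
  -- The roots of `f` need not lie in `L`, so they are compared with `x` in an algebraic closure.
  let Ω := AlgebraicClosure L
  have : Algebra.IsAlgebraic K Ω := .trans K L Ω
  have : Normal K Ω := ⟨fun _ => IsAlgClosed.splits _⟩
  let w := (integralClosureValuationSubring A K Ω).valuation
  have hw (z : Ω) : w z ≤ 1 ↔ IsIntegral A z := valuation_integralClosureValuationSubring_le_one_iff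
  have hvw : v.IsEquiv (w.comap (algebraMap L Ω)) := Valuation.isEquiv_iff_val_le_one.mpr
    fun {z} => (hv z).trans <|
      (isIntegral_algebraMap_iff (algebraMap L Ω).injective).symm.trans (hw _).symm
  have algebraMap_sub (a : K) :
      algebraMap L Ω x - algebraMap K Ω a = algebraMap L Ω (x - algebraMap K L a) := by
    rw [map_sub, ← IsScalarTower.algebraMap_apply]
  have hxΩ (a : K) : ∃ b : K, w (algebraMap L Ω x - algebraMap K Ω b) <
      w (algebraMap L Ω x - algebraMap K Ω a) := by
    simp only [algebraMap_sub]
    exact (hx a).imp fun b hb => hvw.lt_iff_lt.mp hb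
  obtain ⟨b, hb⟩ := exists_forall_constTermDominates_taylor hw hxΩ hf0 (IsAlgClosed.splits _)
    fun m hm hle => by
      have h := valuation_natCast_eq_one_of_lt_finrank hv hprime hx hm (hle.trans_lt hf)
      rwa [hvw.eq_one_iff_eq_one, Valuation.comap_apply, map_natCast] at h
  refine ⟨b, fun a hab i => hvw.le_iff_le.mpr ?_⟩
  have hdom := hb a
    (by simpa only [algebraMap_sub, Valuation.comap_apply] using hvw.le_iff_le.mp hab)
  have hle := (hdom.le i).trans_eq hdom.valuation_eval_eq.symm
  rwa [eval_map_algebraMap, aeval_sub_algebraMap_taylor, aeval_algebraMap_apply, coeff_map,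
    algebraMap_sub, IsScalarTower.algebraMap_apply K L Ω, ← map_pow, ← map_mul] at hle

theorem exists_forall_mem_adjoin_of_forall_exists_valuation_sub_lt [IsDomain A] [ValuationRing A]
    [HenselianLocalRing A] [IsFractionRing A K] [Normal K L] (hv : ∀ z, v z ≤ 1 ↔ IsIntegral A z)
    (hprime : (Module.finrank K L).Prime) {x : L} (hxK : x ∉ (algebraMap K L).range)
    (hx : ∀ a : K, ∃ b : K, v (x - algebraMap K L b) < v (x - algebraMap K L a))
    (hrange : ∀ y, v y ∈ Set.range (v.comap (algebraMap K L)))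
    {S : Finset L} (hS : ∀ z ∈ S, v z ≤ 1) :
    ∃ s : L, v s ≤ 1 ∧ ∀ z ∈ S, z ∈ Algebra.adjoin A {s} := by
  choose f hf hfz using exists_natDegree_lt_aeval_eq hprime hxK
  choose b hb using fun z => exists_forall_valuation_taylor_coeff_le hv hprime hx (hf z)
  obtain rfl | hne := S.eq_empty_or_nonempty
  · exact ⟨0, by simp⟩
  obtain ⟨z₀, -, hmin⟩ := Finset.exists_min_image S (fun z => v (x - algebraMap K L (b z))) hne
  let y := x - algebraMap K L (b z₀)
  obtain ⟨c, hc⟩ := hrange y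
  have hy0 : v y ≠ 0 := v.ne_zero_iff.mpr fun h => hxK ⟨b z₀, (sub_eq_zero.mp h).symm⟩
  have hcy : v (c⁻¹ • y) = 1 := by
    rw [Algebra.smul_def, map_mul, map_inv₀, map_inv₀, ← Valuation.comap_apply, hc,
      inv_mul_cancel₀ hy0]
  refine ⟨c⁻¹ • y, hcy.le, fun z hz => ?_⟩
  rw [← hfz z, ← aeval_sub_algebraMap_taylor x (b z₀)]
  refine aeval_mem_adjoin_smul hv (v.ne_zero_iff.mp (hcy ▸ one_ne_zero)) fun i => ?_
  rw [hcy, one_pow]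
  exact (hb z (b z₀) (hmin z hz) i).trans ((hfz z).symm ▸ hS z hz)

theorem exists_valuation_sub_lt {x : L} (hxK : x ∉ (algebraMap K L).range)
    (hrange : ∀ y, v y ∈ Set.range (v.comap (algebraMap K L)))
    (hres : ∀ y, v y ≤ 1 → ∃ a : K, v (y - algebraMap K L a) < 1) (a : K) :
    ∃ b : K, v (x - algebraMap K L b) < v (x - algebraMap K L a) := by
  let y := x - algebraMap K L a
  have hy0 : v y ≠ 0 := v.ne_zero_iff.mpr fun h => hxK ⟨a, (sub_eq_zero.mp h).symm⟩
  obtain ⟨c, hc⟩ := hrange y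
  rw [Valuation.comap_apply] at hc
  have hc0 : algebraMap K L c ≠ 0 := v.ne_zero_iff.mp (hc ▸ hy0)
  obtain ⟨d, hd⟩ := hres (y / algebraMap K L c) (by rw [map_div₀, hc, div_self hy0])
  refine ⟨a + c * d, ?_⟩
  calc v (x - algebraMap K L (a + c * d))
      = v (algebraMap K L c) * v (y / algebraMap K L c - algebraMap K L d) := by
        rw [← map_mul, mul_sub, mul_div_cancel₀ _ hc0, map_add, map_mul, sub_add_eq_sub_sub]
    _ < v (algebraMap K L c) := mul_lt_of_lt_one_right (hc ▸ zero_lt_iff.mpr hy0) hd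
    _ = v y := hc

theorem exists_forall_mem_adjoin_of_immediate [IsDomain A] [ValuationRing A]
    [HenselianLocalRing A] [IsFractionRing A K] [Normal K L] (hv : ∀ z, v z ≤ 1 ↔ IsIntegral A z)
    (hprime : (Module.finrank K L).Prime)
    (hrange : ∀ y, v y ∈ Set.range (v.comap (algebraMap K L)))
    (hres : ∀ y, v y ≤ 1 → ∃ a : K, v (y - algebraMap K L a) < 1)
    {S : Finset L} (hS : ∀ z ∈ S, v z ≤ 1) :
    ∃ s : L, v s ≤ 1 ∧ ∀ z ∈ S, z ∈ Algebra.adjoin A {s} := by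
  obtain ⟨x, hxK⟩ : ∃ x, x ∉ (algebraMap K L).range := by
    by_contra! h
    refine hprime.ne_one ((finrank_eq_one_iff_of_nonzero' (1 : L) one_ne_zero).mpr fun y => ?_)
    exact (h y).imp fun c hc => by rw [← Algebra.algebraMap_eq_smul_one, hc]
  exact exists_forall_mem_adjoin_of_forall_exists_valuation_sub_lt hv hprime hxK
    (exists_valuation_sub_lt hxK hrange hres) hrange hS

theorem exists_forall_mem_adjoin_of_forall_exists_valuation_sub_lt_one [IsDomain A]
    [ValuationRing A] [HenselianLocalRing A] [IsFractionRing A K] [IsGalois K L]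
    (hv : ∀ z, v z ≤ 1 ↔ IsIntegral A z) (hsurj : Function.Surjective v)
    (hprime : (Module.finrank K L).Prime)
    (hres : ∀ y, v y ≤ 1 → ∃ a : K, v (y - algebraMap K L a) < 1)
    {S : Finset L} (hS : ∀ z ∈ S, v z ≤ 1) :
    ∃ s : L, v s ≤ 1 ∧ ∀ z ∈ S, z ∈ Algebra.adjoin A {s} := by
  by_cases hrange : ∀ y, v y ∈ Set.range (v.comap (algebraMap K L))
  · exact exists_forall_mem_adjoin_of_immediate hv hprime hrange hres hS
  · obtain ⟨y, hy⟩ := not_forall.mp hrange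
    exact exists_forall_mem_adjoin_of_valuation_notMem_range hv hsurj hprime hy hS

end Immediate

section Residue

variable {A B K L Γ₀ : Type*} [CommRing A] [IsLocalRing A] [CommRing B] [IsLocalRing B]
  [Algebra A B] [IsLocalHom (algebraMap A B)] [Field K] [Algebra A K] [Field L] [Algebra K L]
  [Algebra A L] [IsScalarTower A K L] [Algebra B L] [IsScalarTower A B L]
  [LinearOrderedCommGroupWithZero Γ₀] {v : Valuation L Γ₀}

theorem exists_valuation_sub_lt_one (hv : v.Integers B)
    (hres : ∀ b : B, residue B b ∈ (algebraMap (ResidueField A) (ResidueField B)).range) {y : L}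
    (hy : v y ≤ 1) : ∃ a : K, v (y - algebraMap K L a) < 1 := by
  obtain ⟨b, rfl⟩ := hv.exists_of_le_one hy
  obtain ⟨c, hc⟩ := hres b
  obtain ⟨a, rfl⟩ := residue_surjective c
  rw [ResidueField.algebraMap_residue] at hc
  have hmem : b - algebraMap A B a ∈ maximalIdeal B := Ideal.Quotient.eq.mp hc.symm
  refine ⟨algebraMap A K a, ?_⟩
  rw [← IsScalarTower.algebraMap_apply, IsScalarTower.algebraMap_apply A B L, ← map_sub]
  exact (hv.map_le_one _).lt_of_ne (hv.isUnit_iff_valuation_eq_one.not.mp hmem)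

end Residue

theorem mem_adjoin_singleton_of_coe_mem {R S : Type*} [CommRing R] [CommRing S] [Algebra R S]
    {U : Subalgebra R S} {s z : U} (h : (z : S) ∈ Algebra.adjoin R {(s : S)}) :
    z ∈ Algebra.adjoin R {s} := by
  rw [← U.val_apply, ← U.val_apply, ← AlgHom.map_adjoin_singleton] at h
  obtain ⟨w, hw, hwz⟩ := h
  exact Subtype.val_injective hwz ▸ hw

/-- Let `A` be a Henselian valuation ring which is not a field, with fraction field `K`.
Let `L/K` be a Galois extension whose Galois group is cyclic of prime order `ℓ`, and let
`B` be the integral closure of `A` in `L`.  Then every finite subset `S` of `B` is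
contained in `A[s]` for some `s ∈ B`. -/
theorem finset_subset_adjoin_singleton
    {A K L : Type*} [CommRing A] [IsDomain A] [ValuationRing A] [HenselianLocalRing A]
    (hA : ¬IsField A)
    [Field K] [Algebra A K] [IsFractionRing A K]
    [Field L] [Algebra K L] [Algebra A L] [IsScalarTower A K L]
    [IsGalois K L] [FiniteDimensional K L]
    (ℓ : ℕ) (hℓ : ℓ.Prime) [IsCyclic (L ≃ₐ[K] L)]
    (hcard : Nat.card (L ≃ₐ[K] L) = ℓ)
    (S : Finset ↥(integralClosure A L)) :
    ∃ s : ↥(integralClosure A L),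
      (S : Set ↥(integralClosure A L)) ⊆ Algebra.adjoin A {s} := by
  let B := integralClosure A L
  have hprime : (Module.finrank K L).Prime := by rwa [← IsGalois.card_aut_eq_finrank, hcard]
  have : IsLocalRing B := isLocalRing_integralClosure K
  have : FaithfulSMul A L := .trans A K L
  have : IsLocalHom (algebraMap A B) := Algebra.IsIntegral.isLocalHom A B
  by_cases hres : ∀ b : B, residue B b ∈ (algebraMap (ResidueField A) (ResidueField B)).range
  · let V := integralClosureValuationSubring A K L
    have hv (z : L) : V.valuation z ≤ 1 ↔ IsIntegral A z :=
      valuation_integralClosureValuationSubring_le_one_iff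
    have hVB := integers_integralClosure hv
    obtain ⟨s, hs, hmem⟩ := exists_forall_mem_adjoin_of_forall_exists_valuation_sub_lt_one hv
      V.valuation_surjective hprime (fun _ => exists_valuation_sub_lt_one hVB hres)
      (S := S.map (.subtype (· ∈ B))) fun z hz => by
        obtain ⟨b, -, rfl⟩ := Finset.mem_map.mp hz
        exact hVB.map_le_one b
    exact ⟨⟨s, (hv s).mp hs⟩, fun z hz =>
      mem_adjoin_singleton_of_coe_mem (hmem z (Finset.mem_map_of_mem _ hz))⟩
  · obtain ⟨b, hb⟩ := not_forall.mp hres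
    exact ⟨b, fun z _ => adjoin_singleton_eq_top_of_residue_notMem_range hprime hb ▸
      Algebra.mem_top⟩
end
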